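/- arXiv:2004.07550 — 7 statements merged into one kernel-verified Lean document; each statement's English description precedes it below -/
import Mathlib

section
/- Let X ⊆ ℤ^n be a finite digital image with c1-adjacency, where n ≤ 3, whose cubical Euler characteristic χ̄(X) is nonzero, and let f : X → X be a c1-continuous self-map homotopic to the identity map of X. Then f has a fixed point or f has at least two distinct n-approximate fixed points. -/
/-- `c1`-adjacency on `ℤ^n`: `x, y` are `c1`-adjacent iff `∑ i, |x i − y i| = 1`. -/
def c1Adj {n : ℕ} (x y : Fin n → ℤ) : Prop := (∑ i, |x i - y i|) = 1

/-- `f` is `c1`-continuous on the digital image `X ⊆ ℤ^n`: `c1`-adjacent points of `X` have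
equal or `c1`-adjacent images. -/
def c1Cont {n m : ℕ} (X : Finset (Fin n → ℤ)) (f : (Fin n → ℤ) → (Fin m → ℤ)) : Prop :=
  ∀ x ∈ X, ∀ y ∈ X, c1Adj x y → f x = f y ∨ c1Adj (f x) (f y)

/-- `f` maps the digital image `X` into the digital image `Y`. -/
def MapsInto {n m : ℕ} (X : Finset (Fin n → ℤ)) (Y : Finset (Fin m → ℤ))
    (f : (Fin n → ℤ) → (Fin m → ℤ)) : Prop :=
  ∀ x ∈ X, f x ∈ Y

/-- The elementary cube `σ = t_1 × ⋯ × t_n ⊆ ℤ^n` with minimal corner `a`, where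
`t_i = {a i, a i + 1}` for `i ∈ D` (the nondegenerate directions, so `dim σ = D.card`)
and `t_i = {a i}` otherwise. -/
def eCube {n : ℕ} (a : Fin n → ℤ) (D : Finset (Fin n)) : Finset (Fin n → ℤ) :=
  D.powerset.image (fun s i => a i + if i ∈ s then 1 else 0)

/-- A homotopy between continuous maps `f, g : X → Y` is `H : X × {0,…,k} → Y` with
`H(x,0) = f(x)`, `H(x,k) = g(x)`, sending consecutive stages of each point to equal or
adjacent points, and continuous at each stage; `f ≃ g` iff such an `H` exists. -/
def c1Homotopic {n m : ℕ} (X : Finset (Fin n → ℤ)) (Y : Finset (Fin m → ℤ))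
    (f g : (Fin n → ℤ) → (Fin m → ℤ)) : Prop :=
  ∃ (k : ℕ) (H : (Fin n → ℤ) → ℕ → (Fin m → ℤ)),
    (∀ x ∈ X, ∀ t ≤ k, H x t ∈ Y) ∧
    (∀ x ∈ X, H x 0 = f x) ∧ (∀ x ∈ X, H x k = g x) ∧
    (∀ x ∈ X, ∀ t, t + 1 ≤ k → (H x t = H x (t + 1) ∨ c1Adj (H x t) (H x (t + 1)))) ∧
    (∀ t ≤ k, ∀ x ∈ X, ∀ x' ∈ X, c1Adj x x' → (H x t = H x' t ∨ c1Adj (H x t) (H x' t)))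

/-- `x` is a `k`-approximate fixed point of `f` on `X`: there is a `c1`-path in `X` from
`x` to `f x` of length at most `k`. -/
def nApproxFix {n : ℕ} (X : Finset (Fin n → ℤ)) (f : (Fin n → ℤ) → (Fin n → ℤ))
    (k : ℕ) (x : Fin n → ℤ) : Prop :=
  ∃ (m : ℕ) (p : ℕ → (Fin n → ℤ)), m ≤ k ∧ p 0 = x ∧ p m = f x ∧
    (∀ t ≤ m, p t ∈ X) ∧
    (∀ t, t + 1 ≤ m → (p t = p (t + 1) ∨ c1Adj (p t) (p (t + 1))))

open Classical in
/-- `ε(f, σ)` for `σ = eCube a D` with `f(σ) = σ`: on the nondegenerate directions `D` of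
`σ`, `f` is given by an affine map `x ↦ b + Mx` with `M` a signed permutation matrix
(a permutation `π` of `D` together with signs `s : D → {±1}`), and
`ε(f,σ) = det M = sgn(π) ⬝ ∏ s`. (Junk value `0` if `f` is not of this form on `σ`.) -/
noncomputable def cubeSign {n : ℕ} (f : (Fin n → ℤ) → (Fin n → ℤ))
    (a : Fin n → ℤ) (D : Finset (Fin n)) : ℤ :=
  if h : ∃ p : Equiv.Perm {i // i ∈ D} × ({i // i ∈ D} → ℤ),
      (∀ i, p.2 i = 1 ∨ p.2 i = -1) ∧
      ∀ x ∈ eCube a D, ∀ i : {i // i ∈ D},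
        f x (i : Fin n) = f a (i : Fin n) + p.2 i * (x ((p.1 i : Fin n)) - a ((p.1 i : Fin n)))
  then ((Equiv.Perm.sign h.choose.1 : ℤˣ) : ℤ) * ∏ i, h.choose.2 i
  else 0

open Classical in
/-- The cubical Lefschetz number `L̄(f) = ∑_σ (−1)^{dim σ} ε(f,σ)`, summing over all
elementary cubes `σ ⊆ X` with `f(σ) = σ`. -/
noncomputable def cubLef {n : ℕ} (X : Finset (Fin n → ℤ))
    (f : (Fin n → ℤ) → (Fin n → ℤ)) : ℤ :=
  ∑ a ∈ X, ∑ D : Finset (Fin n),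
    if eCube a D ⊆ X ∧ (eCube a D).image f = eCube a D then
      (-1 : ℤ) ^ D.card * cubeSign f a D
    else 0

open Classical in
/-- The cubical Euler characteristic `χ̄(X) = ∑_q (−1)^q k_q`, with `k_q` the number of
elementary cubes of dimension `q` contained in `X`. -/
noncomputable def cubEuler {n : ℕ} (X : Finset (Fin n → ℤ)) : ℤ :=
  ∑ a ∈ X, ∑ D : Finset (Fin n),
    if eCube a D ⊆ X then (-1 : ℤ) ^ D.card else 0


namespace CubLef

abbrev Coch (m : ℕ) := (Fin m → ℤ) → Finset (Fin m) → ℤ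

def sg {m : ℕ} (i : Fin m) (D : Finset (Fin m)) : ℤ := (-1) ^ (D.filter (· < i)).card

def up {m : ℕ} (x : Fin m → ℤ) (i : Fin m) : Fin m → ℤ := x + Pi.single i 1

lemma up_comm {m : ℕ} (x : Fin m → ℤ) (i j : Fin m) : up (up x i) j = up (up x j) i := by
  simp only [up]; abel

def dd {m : ℕ} : Coch m →ₗ[ℤ] Coch m where
  toFun ω := fun x D => ∑ i ∈ D, sg i D * (ω (up x i) (D.erase i) - ω x (D.erase i))
  map_add' ω η := by
    funext x D
    simp only [Pi.add_apply, ← Finset.sum_add_distrib]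
    exact Finset.sum_congr rfl fun i _ => by ring
  map_smul' c ω := by
    funext x D
    simp only [Pi.smul_apply, Finset.mul_sum, smul_eq_mul, RingHom.id_apply]
    exact Finset.sum_congr rfl fun i _ => by ring

lemma dd_apply {m : ℕ} (ω : Coch m) (x D) :
    dd ω x D = ∑ i ∈ D, sg i D * (ω (up x i) (D.erase i) - ω x (D.erase i)) := rfl

lemma sg_erase_lt {m : ℕ} {i k : Fin m} {D : Finset (Fin m)} (hk : k ∈ D) (h : k < i) :
    sg i (D.erase k) = - sg i D := by
  unfold sg
  have : (D.filter (· < i)).card = ((D.erase k).filter (· < i)).card + 1 := by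
    rw [Finset.filter_erase, Finset.card_erase_add_one]
    simp [hk, h]
  rw [this, pow_succ]; ring

lemma sg_erase_ge {m : ℕ} {i k : Fin m} {D : Finset (Fin m)} (h : ¬ k < i) :
    sg i (D.erase k) = sg i D := by
  unfold sg
  rw [Finset.filter_erase, Finset.erase_eq_of_notMem]
  simp [h]

lemma sg_swap {m : ℕ} {i k : Fin m} {D : Finset (Fin m)} (hi : i ∈ D) (hk : k ∈ D)
    (h : i ≠ k) : sg i D * sg k (D.erase i) = - (sg k D * sg i (D.erase k)) := by
  rcases lt_or_gt_of_ne h with h | h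
  · rw [sg_erase_lt hi h, sg_erase_ge (not_lt.2 h.le)]; ring
  · rw [sg_erase_lt hk h, sg_erase_ge (not_lt.2 h.le)]; ring

lemma dd_dd {m : ℕ} (ω : Coch m) : dd (dd ω) = 0 := by
  funext x D
  have key : ∀ i ∈ D, sg i D * (dd ω (up x i) (D.erase i) - dd ω x (D.erase i)) =
      ∑ k ∈ D, if i = k then 0 else sg i D * sg k (D.erase i) *
        (ω (up (up x i) k) ((D.erase i).erase k) - ω (up x i) ((D.erase i).erase k)
          - ω (up x k) ((D.erase i).erase k) + ω x ((D.erase i).erase k)) := by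
    intro i hi
    rw [dd_apply, dd_apply, ← Finset.sum_sub_distrib, Finset.mul_sum,
      ← Finset.add_sum_erase D _ hi]
    simp only [if_true, zero_add]
    refine Finset.sum_congr rfl fun k hk => ?_
    rw [if_neg (Finset.ne_of_mem_erase hk).symm]
    ring
  rw [dd_apply, Finset.sum_congr rfl key]
  set F : Fin m → Fin m → ℤ := fun i k => if i = k then 0 else sg i D * sg k (D.erase i) *
        (ω (up (up x i) k) ((D.erase i).erase k) - ω (up x i) ((D.erase i).erase k)
          - ω (up x k) ((D.erase i).erase k) + ω x ((D.erase i).erase k)) with hF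
  have hanti : ∀ i ∈ D, ∀ k ∈ D, F i k = - F k i := by
    intro i hi k hk
    simp only [hF]
    by_cases h : i = k
    · simp [h]
    · rw [if_neg h, if_neg (Ne.symm h), sg_swap hi hk h, up_comm x i k,
        Finset.erase_right_comm (a := i)]
      ring
  have h1 : ∑ i ∈ D, ∑ k ∈ D, F i k = - ∑ i ∈ D, ∑ k ∈ D, F i k := by
    conv_lhs => rw [Finset.sum_comm]
    rw [← Finset.sum_neg_distrib]
    refine Finset.sum_congr rfl fun i hi => ?_
    rw [← Finset.sum_neg_distrib]
    exact Finset.sum_congr rfl fun k hk => hanti k hk i hi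
  show ∑ i ∈ D, ∑ k ∈ D, F i k = 0
  linarith

def mu {m : ℕ} (u : (Fin m → ℤ) → ℤ) : Coch m →ₗ[ℤ] Coch m where
  toFun ω := fun x D => u x * ω x D
  map_add' ω η := by funext x D; simp [mul_add]
  map_smul' c ω := by funext x D; simp; ring

lemma mu_apply {m : ℕ} (u : (Fin m → ℤ) → ℤ) (ω : Coch m) (x D) :
    mu u ω x D = u x * ω x D := rfl

def eps {m : ℕ} (u : (Fin m → ℤ) → ℤ) : Coch m →ₗ[ℤ] Coch m :=
  dd ∘ₗ mu u - mu u ∘ₗ dd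

lemma eps_apply {m : ℕ} (u : (Fin m → ℤ) → ℤ) (ω : Coch m) (x D) :
    eps u ω x D = ∑ i ∈ D, sg i D * (u (up x i) - u x) * ω (up x i) (D.erase i) := by
  show dd (mu u ω) x D - mu u (dd ω) x D = _
  rw [mu_apply, dd_apply, dd_apply, Finset.mul_sum, ← Finset.sum_sub_distrib]
  refine Finset.sum_congr rfl fun i _ => ?_
  simp only [mu_apply]; ring

lemma dd_eps {m : ℕ} (u : (Fin m → ℤ) → ℤ) (ω : Coch m) :
    dd (eps u ω) = - eps u (dd ω) := by
  simp [eps, dd_dd]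

variable {m n : ℕ}

def uu (g : (Fin m → ℤ) → (Fin n → ℤ)) (j : Fin n) (c : ℤ) : (Fin m → ℤ) → ℤ :=
  fun x => if c < g x j then 1 else 0

lemma uu_sub (g : (Fin m → ℤ) → (Fin n → ℤ)) (j : Fin n) (c : ℤ) (x) :
    uu g j (c - 1) x - uu g j c x = if g x j = c then 1 else 0 := by
  unfold uu; split_ifs <;> omega

def op (g : (Fin m → ℤ) → (Fin n → ℤ)) (b : Fin n → ℤ) (E : Finset (Fin n)) (j : Fin n) :
    Coch m →ₗ[ℤ] Coch m :=
  if j ∈ E then eps (uu g j (b j)) else mu (uu g j (b j - 1) - uu g j (b j))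

def one : Coch m := fun _ D => if D = ∅ then 1 else 0

lemma dd_one : dd (one : Coch m) = 0 := by
  funext x D; simp [dd_apply, one]

def phi (g : (Fin m → ℤ) → (Fin n → ℤ)) (b : Fin n → ℤ) (E : Finset (Fin n)) :
    List (Fin n) → Coch m
  | [] => one
  | j :: L => op g b E j (phi g b E L)

lemma phi_congr (g : (Fin m → ℤ) → (Fin n → ℤ)) {b b' : Fin n → ℤ} {E E' : Finset (Fin n)} :
    ∀ (L : List (Fin n)), (∀ j ∈ L, b j = b' j ∧ (j ∈ E ↔ j ∈ E')) →
      phi g b E L = phi g b' E' L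
  | [], _ => rfl
  | j :: L, h => by
    have h1 := h j (by simp)
    have h2 := phi_congr g L fun k hk => h k (by simp [hk])
    simp only [phi, op, h1.1, h1.2, h2]

def kap (E : Finset (Fin n)) (j : Fin n) : List (Fin n) → ℤ
  | [] => 0
  | k :: L => if j = k then (if k ∈ E then 0 else 1) else (if k ∈ E then -1 else 1) * kap E j L

lemma kap_notMem (E : Finset (Fin n)) (j : Fin n) : ∀ L : List (Fin n), j ∉ L → kap E j L = 0
  | [], _ => rfl
  | k :: L, h => by
    simp only [List.mem_cons, not_or] at h
    simp [kap, h.1, kap_notMem E j L h.2]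

lemma kap_mem (E : Finset (Fin n)) (j : Fin n) : ∀ L : List (Fin n), j ∈ E → kap E j L = 0
  | [], _ => rfl
  | k :: L, h => by
    rw [kap, kap_mem E j L h]
    split_ifs <;> simp_all

lemma op_ins_ne (g : (Fin m → ℤ) → (Fin n → ℤ)) (b b' : Fin n → ℤ) (E : Finset (Fin n))
    {j k : Fin n} (h : j ≠ k) (hb : b' k = b k) : op g b' (insert j E) k = op g b E k := by
  simp [op, hb, h.symm]

lemma leib (g : (Fin m → ℤ) → (Fin n → ℤ)) (b : Fin n → ℤ) (E : Finset (Fin n)) :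
    ∀ L : List (Fin n), L.Nodup → dd (phi g b E L) = ∑ j, kap E j L •
      (phi g (b - Pi.single j 1) (insert j E) L - phi g b (insert j E) L)
  | [], _ => by simp [phi, kap, dd_one]
  | k :: L, hL => by
    have hk : k ∉ L := (List.nodup_cons.1 hL).1
    have ih := leib g b E L (List.nodup_cons.1 hL).2
    rw [← Finset.add_sum_erase _ _ (Finset.mem_univ k), kap_notMem E k L hk, zero_smul,
      zero_add] at ih
    rw [← Finset.add_sum_erase _ _ (Finset.mem_univ k)]
    have hsum : ∑ j ∈ Finset.univ.erase k, kap E j (k :: L) •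
        (phi g (b - Pi.single j 1) (insert j E) (k :: L) - phi g b (insert j E) (k :: L)) =
        (if k ∈ E then (-1 : ℤ) else 1) • op g b E k (dd (phi g b E L)) := by
      rw [ih, map_sum, Finset.smul_sum]
      refine Finset.sum_congr rfl fun j hj => ?_
      have hjk := Finset.ne_of_mem_erase hj
      simp only [kap, hjk, if_false, phi]
      rw [op_ins_ne g b _ E hjk (by simp [hjk.symm]), op_ins_ne g b b E hjk rfl, map_smul,
        map_sub, smul_smul]
    rw [hsum]
    by_cases hE : k ∈ E
    · simp only [kap, hE, if_true, zero_smul, zero_add, phi, op, dd_eps, neg_smul, one_smul]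
    · simp only [kap, hE, if_true, if_false, one_smul, phi]
      rw [phi_congr g (b := b - Pi.single k 1) (b' := b) (E := insert k E) (E' := E) L
        (fun j hj => by
          have : j ≠ k := fun h => hk (h ▸ hj)
          simp [this]),
        phi_congr g (b := b) (b' := b) (E := insert k E) (E' := E) L
        (fun j hj => by
          have : j ≠ k := fun h => hk (h ▸ hj)
          simp [this])]
      simp only [op, hE, if_false, Finset.mem_insert_self, if_true]
      funext x D
      simp only [Pi.sub_apply, Pi.single_eq_same, Pi.add_apply, eps_apply, mu_apply, dd_apply,
        Finset.mul_sum, ← Finset.sum_sub_distrib, ← Finset.sum_add_distrib]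
      refine Finset.sum_congr rfl fun i _ => ?_
      ring

lemma mem_eCube {a : Fin m → ℤ} {D : Finset (Fin m)} {y : Fin m → ℤ} :
    y ∈ eCube a D ↔ ∀ j, (j ∈ D → y j = a j ∨ y j = a j + 1) ∧ (j ∉ D → y j = a j) := by
  unfold eCube
  simp only [Finset.mem_image, Finset.mem_powerset]
  constructor
  · rintro ⟨s, hs, rfl⟩ j
    refine ⟨fun _ => ?_, fun h => ?_⟩
    · by_cases h : j ∈ s <;> simp [h]
    · have : j ∉ s := fun h' => h (hs h')
      simp [this]
  · intro h
    refine ⟨D.filter (fun j => y j ≠ a j), Finset.filter_subset _ _, ?_⟩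
    funext j
    have := h j
    by_cases hD : j ∈ D
    · have h2 := this.1 hD
      by_cases h3 : y j = a j
      · simp [h3]
      · simp [h3, hD]; omega
    · simp [hD, this.2 hD]

lemma up_apply (x : Fin m → ℤ) (i j : Fin m) : up x i j = x j + if j = i then 1 else 0 := by
  simp [up, Pi.single_apply]

def far (x : Fin m → ℤ) (D : Finset (Fin m)) : Fin m → ℤ := fun i => x i + if i ∈ D then 1 else 0

lemma far_empty (x : Fin m → ℤ) : far x ∅ = x := by funext i; simp [far]

lemma far_up {x : Fin m → ℤ} {D : Finset (Fin m)} {i} (h : i ∈ D) :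
    far (up x i) (D.erase i) = far x D := by
  funext j
  by_cases hj : j = i
  · subst hj; simp [far, up_apply, h]
  · simp [far, up_apply, hj]

lemma self_mem (x : Fin m → ℤ) (D) : x ∈ eCube x D := by rw [mem_eCube]; simp

lemma far_mem (x : Fin m → ℤ) (D) : far x D ∈ eCube x D := by
  rw [mem_eCube]; intro j; constructor <;> intro h <;> simp [far, h]

lemma face_up {x : Fin m → ℤ} {D : Finset (Fin m)} {i} (h : i ∈ D) :
    eCube (up x i) (D.erase i) ⊆ eCube x D := by
  intro y; rw [mem_eCube, mem_eCube]
  intro H j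
  have := H j
  by_cases hj : j = i
  · subst hj; simp [up_apply] at this; simp [h, this]
  · simpa [up_apply, hj] using this

lemma face_lo {x : Fin m → ℤ} {D : Finset (Fin m)} {i} (h : i ∈ D) :
    eCube x (D.erase i) ⊆ eCube x D := by
  intro y; rw [mem_eCube, mem_eCube]
  intro H j
  have := H j
  by_cases hj : j = i
  · subst hj; simp at this; simp [h, this]
  · simpa [hj] using this

lemma adj_up (x : Fin m → ℤ) (i : Fin m) : c1Adj x (up x i) := by
  unfold c1Adj
  rw [Finset.sum_eq_single i] <;> simp +contextual [up_apply]

lemma adj_step {v w : Fin n → ℤ} (h : v = w ∨ c1Adj v w) {j} (hj : v j ≠ w j) :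
    |v j - w j| = 1 ∧ ∀ k, k ≠ j → v k = w k := by
  rcases h with h | h
  · exact absurd (congrFun h j) hj
  unfold c1Adj at h
  rw [← Finset.add_sum_erase _ _ (Finset.mem_univ j)] at h
  have h1 : 1 ≤ |v j - w j| := Int.one_le_abs (sub_ne_zero.2 hj)
  have h2 : 0 ≤ ∑ i ∈ Finset.univ.erase j, |v i - w i| :=
    Finset.sum_nonneg fun _ _ => abs_nonneg _
  refine ⟨by linarith, fun k hk => ?_⟩
  have h3 : ∑ i ∈ Finset.univ.erase j, |v i - w i| = 0 := by linarith
  rw [Finset.sum_eq_zero_iff_of_nonneg fun _ _ => abs_nonneg _] at h3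
  have := h3 k (by simp [hk])
  rw [abs_eq_zero] at this
  linarith

def Cont (Q : Set (Fin m → ℤ)) (g : (Fin m → ℤ) → (Fin n → ℤ)) : Prop :=
  ∀ p i, p ∈ Q → up p i ∈ Q → g p = g (up p i) ∨ c1Adj (g p) (g (up p i))

lemma ends {Q : Set (Fin m → ℤ)} {g : (Fin m → ℤ) → (Fin n → ℤ)} (hg : Cont Q g)
    (b : Fin n → ℤ) (E : Finset (Fin n)) :
    ∀ (L : List (Fin n)), L.Nodup → ∀ (x : Fin m → ℤ) (D : Finset (Fin m)),
      (∀ y ∈ eCube x D, y ∈ Q) → phi g b E L x D ≠ 0 →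
      (∀ j ∈ L, j ∈ E → (g x j = b j ∧ g (far x D) j = b j + 1) ∨
        (g x j = b j + 1 ∧ g (far x D) j = b j)) ∧
      (∀ j ∈ L, j ∉ E → g x j = b j ∧ g (far x D) j = b j) ∧
      (∀ j, j ∉ L → g x j = g (far x D) j)
  | [], _, x, D, _, h => by
    simp only [phi, one] at h
    have : D = ∅ := by by_contra h'; simp [h'] at h
    subst this; simp [far_empty]
  | k :: L, hL, x, D, hQ, h => by
    have hk : k ∉ L := (List.nodup_cons.1 hL).1
    by_cases hE : k ∈ E
    · simp only [phi, op, hE, if_true, eps_apply] at h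
      obtain ⟨i, hi, hne⟩ := Finset.exists_ne_zero_of_sum_ne_zero h
      have h1 : phi g b E L (up x i) (D.erase i) ≠ 0 := right_ne_zero_of_mul hne
      have h2 := right_ne_zero_of_mul (left_ne_zero_of_mul hne)
      obtain ⟨A, B, C⟩ := ends hg b E L (List.nodup_cons.1 hL).2 (up x i) (D.erase i)
        (fun y hy => hQ y (face_up hi hy)) h1
      rw [far_up hi] at A B C
      have hst := hg x i (hQ _ (self_mem _ _)) (hQ _ (face_up hi (self_mem _ _)))
      have hkne : g x k ≠ g (up x i) k := by
        intro h'; apply h2; simp [uu, h']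
      obtain ⟨s1, s2⟩ := adj_step hst hkne
      have hkk : (g x k = b k ∧ g (up x i) k = b k + 1) ∨
          (g x k = b k + 1 ∧ g (up x i) k = b k) := by
        unfold uu at h2
        rcases abs_eq (by norm_num) |>.1 s1 with s | s <;> split_ifs at h2 <;> omega
      have hkC := C k hk
      refine ⟨fun j hj hjE => ?_, fun j hj hjE => ?_, fun j hj => ?_⟩
      · by_cases hjk : j = k
        · subst hjk; rw [← hkC]; exact hkk
        · rw [s2 j hjk]; exact A j (by simpa [hjk] using hj) hjE
      · have hjk : j ≠ k := by rintro rfl; exact hjE hE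
        rw [s2 j hjk]; exact B j (by simpa [hjk] using hj) hjE
      · simp only [List.mem_cons, not_or] at hj
        rw [s2 j hj.1]; exact C j hj.2
    · simp only [phi, op, hE, if_false, mu_apply, Pi.sub_apply, uu_sub] at h
      have h1 := right_ne_zero_of_mul h
      have h2 : g x k = b k := by
        by_contra h'; simp [h'] at h
      obtain ⟨A, B, C⟩ := ends hg b E L (List.nodup_cons.1 hL).2 x D hQ h1
      refine ⟨fun j hj hjE => ?_, fun j hj hjE => ?_, fun j hj => ?_⟩
      · have hjk : j ≠ k := by rintro rfl; exact hE hjE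
        exact A j (by simpa [hjk] using hj) hjE
      · by_cases hjk : j = k
        · subst hjk; exact ⟨h2, by rw [← C j hk]; exact h2⟩
        · exact B j (by simpa [hjk] using hj) hjE
      · simp only [List.mem_cons, not_or] at hj
        exact C j hj.2

/-- the full pulled-back cochain -/
def Phi (g : (Fin m → ℤ) → (Fin n → ℤ)) (b : Fin n → ℤ) (E : Finset (Fin n)) : Coch m :=
  phi g b E (List.finRange n)

lemma Ends {Q : Set (Fin m → ℤ)} {g : (Fin m → ℤ) → (Fin n → ℤ)} (hg : Cont Q g)
    {b : Fin n → ℤ} {E : Finset (Fin n)} {x : Fin m → ℤ} {D : Finset (Fin m)}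
    (hQ : ∀ y ∈ eCube x D, y ∈ Q) (h : Phi g b E x D ≠ 0) (j : Fin n) :
    (j ∈ E → (g x j = b j ∧ g (far x D) j = b j + 1) ∨
        (g x j = b j + 1 ∧ g (far x D) j = b j)) ∧
      (j ∉ E → g x j = b j ∧ g (far x D) j = b j) := by
  obtain ⟨A, B, _⟩ := ends hg b E _ (List.nodup_finRange n) x D hQ h
  exact ⟨A j (List.mem_finRange j), B j (List.mem_finRange j)⟩

lemma Ends_unique {Q : Set (Fin m → ℤ)} {g : (Fin m → ℤ) → (Fin n → ℤ)} (hg : Cont Q g)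
    {b b' : Fin n → ℤ} {E E' : Finset (Fin n)} {x : Fin m → ℤ} {D : Finset (Fin m)}
    (hQ : ∀ y ∈ eCube x D, y ∈ Q) (h : Phi g b E x D ≠ 0) (h' : Phi g b' E' x D ≠ 0) :
    b = b' ∧ E = E' := by
  have key : ∀ j, b j = b' j ∧ (j ∈ E ↔ j ∈ E') := by
    intro j
    have h1 := Ends hg hQ h j
    have h2 := Ends hg hQ h' j
    by_cases e1 : j ∈ E <;> by_cases e2 : j ∈ E' <;>
      simp only [e1, e2, true_implies, not_true, not_false_iff, false_implies, true_and,
        and_true] at h1 h2 ⊢ <;> omega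
  exact ⟨funext fun j => (key j).1, Finset.ext fun j => (key j).2⟩

lemma Leib (g : (Fin m → ℤ) → (Fin n → ℤ)) (b : Fin n → ℤ) (E : Finset (Fin n)) (x D) :
    dd (Phi g b E) x D = ∑ j, kap E j (List.finRange n) *
      (Phi g (b - Pi.single j 1) (insert j E) x D - Phi g b (insert j E) x D) := by
  unfold Phi
  rw [leib g b E _ (List.nodup_finRange n)]
  simp [Finset.sum_apply]

lemma kap_eq (E : Finset (Fin n)) (j : Fin n) (hE : j ∉ E) : ∀ L : List (Fin n),
    L.Pairwise (· < ·) → j ∈ L →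
    kap E j L = (-1) ^ (E.filter (fun k => k ∈ L ∧ k < j)).card
  | [], _, h => by simp at h
  | k :: L, hp, h => by
    rw [List.pairwise_cons] at hp
    rw [kap]
    by_cases hjk : j = k
    · subst hjk
      have : E.filter (fun k => k ∈ j :: L ∧ k < j) = ∅ := by
        ext i; simp only [Finset.mem_filter, List.mem_cons, Finset.notMem_empty, iff_false]
        rintro ⟨_, h | h, h'⟩
        · exact absurd h h'.ne
        · exact absurd (hp.1 i h) h'.not_gt
      rw [this]; simp [hE]
    · have hjL : j ∈ L := by simpa [hjk] using h
      have hkj := hp.1 j hjL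
      have hkL : k ∉ L := fun h => lt_irrefl _ (hp.1 k h)
      rw [if_neg hjk, kap_eq E j hE L hp.2 hjL]
      by_cases hkE : k ∈ E
      · have : E.filter (fun i => i ∈ k :: L ∧ i < j) =
            insert k (E.filter (fun i => i ∈ L ∧ i < j)) := by
          ext i; simp only [Finset.mem_filter, List.mem_cons, Finset.mem_insert]
          constructor
          · rintro ⟨h1, h2 | h2, h3⟩ <;> simp [*]
          · rintro (rfl | h)
            · exact ⟨hkE, Or.inl rfl, hkj⟩
            · exact ⟨h.1, Or.inr h.2.1, h.2.2⟩
        rw [this, Finset.card_insert_of_notMem (by simp [hkL])]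
        simp [hkE, pow_succ]
      · have : E.filter (fun i => i ∈ k :: L ∧ i < j) = E.filter (fun i => i ∈ L ∧ i < j) := by
          ext i; simp only [Finset.mem_filter, List.mem_cons]
          constructor
          · rintro ⟨h1, rfl | h2, h3⟩
            · exact absurd h1 hkE
            · exact ⟨h1, h2, h3⟩
          · rintro ⟨h1, h2, h3⟩; exact ⟨h1, Or.inr h2, h3⟩
        rw [this]; simp [hkE]

lemma kap_full {E : Finset (Fin n)} {j : Fin n} (hE : j ∉ E) :
    kap E j (List.finRange n) = sg j E := by
  rw [kap_eq E j hE _ (List.pairwise_lt_finRange n) (List.mem_finRange j)]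
  simp [sg]

lemma sg_ne (j : Fin n) (E) : sg j E ≠ 0 := by
  unfold sg; exact pow_ne_zero _ (by norm_num)

lemma surj {Q : Set (Fin m → ℤ)} {g : (Fin m → ℤ) → (Fin n → ℤ)} (hg : Cont Q g) :
    ∀ (N : ℕ) (b : Fin n → ℤ) (E : Finset (Fin n)) (x : Fin m → ℤ) (D : Finset (Fin m)),
      D.card = N → (∀ y ∈ eCube x D, y ∈ Q) → Phi g b E x D ≠ 0 →
      ∀ w ∈ eCube b E, ∃ y ∈ eCube x D, g y = w := by
  intro N
  induction N with
  | zero =>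
    intro b E x D hD hQ h w hw
    rw [Finset.card_eq_zero] at hD
    subst hD
    refine ⟨x, self_mem _ _, funext fun j => ?_⟩
    have h1 := Ends hg hQ h j
    rw [far_empty] at h1
    have h2 := (mem_eCube.1 hw j)
    by_cases hj : j ∈ E
    · have := h1.1 hj; omega
    · rw [h2.2 hj, (h1.2 hj).1]
  | succ N ih =>
    intro b E x D hD hQ h w hw
    rcases E.eq_empty_or_nonempty with hE | ⟨j, hj⟩
    · subst hE
      refine ⟨x, self_mem _ _, funext fun j => ?_⟩
      have h1 := Ends hg hQ h j
      have h2 := (mem_eCube.1 hw j)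
      rw [h2.2 (by simp), (h1.2 (by simp)).1]
    · set b' : Fin n → ℤ := Function.update b j (w j) with hb'
      have hwj := (mem_eCube.1 hw j).1 hj
      have hins : insert j (E.erase j) = E := Finset.insert_erase hj
      have hd : dd (Phi g b' (E.erase j)) x D ≠ 0 := by
        rw [Leib, Finset.sum_eq_single j]
        · rw [hins, kap_full (by simp)]
          refine mul_ne_zero (sg_ne _ _) ?_
          rcases hwj with hwj | hwj
          · have e1 : b' = b := by rw [hb', hwj, Function.update_eq_self]
            have e2 : Phi g (b' - Pi.single j 1) E x D = 0 := by
              by_contra h'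
              have := congrFun (Ends_unique hg hQ h h').1 j
              simp [e1] at this
              omega
            rw [e2, e1]; simpa using h
          · have e1 : b' - Pi.single j 1 = b := by
              funext k
              by_cases hk : k = j
              · subst hk; simp [hb', hwj]
              · simp [hb', hk]
            have e2 : Phi g b' E x D = 0 := by
              by_contra h'
              have := congrFun (Ends_unique hg hQ h h').1 j
              simp [hb', hwj] at this
            rw [e2, e1]; simpa using h
        · intro k _ hk
          have hz : ∀ c, kap (E.erase j) k (List.finRange n) *
              Phi g c (insert k (E.erase j)) x D = 0 := by
            intro c
            by_contra h'
            have := (Ends_unique hg hQ h (right_ne_zero_of_mul h')).2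
            rw [this] at hj
            simp [Ne.symm hk] at hj
          rw [mul_sub, hz, hz, sub_zero]
        · simp
      rw [dd_apply] at hd
      obtain ⟨i, hi, hne⟩ := Finset.exists_ne_zero_of_sum_ne_zero hd
      have hne := right_ne_zero_of_mul hne
      have hw' : w ∈ eCube b' (E.erase j) := by
        rw [mem_eCube] at hw ⊢
        intro k
        by_cases hk : k = j
        · subst hk; simp [hb']
        · simpa [hb', hk] using hw k
      have hc : (D.erase i).card = N := by rw [Finset.card_erase_of_mem hi, hD]; rfl
      by_cases h0 : Phi g b' (E.erase j) x (D.erase i) = 0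
      · have h1 : Phi g b' (E.erase j) (up x i) (D.erase i) ≠ 0 := by
          intro h'; apply hne; rw [h0, h', sub_zero]
        obtain ⟨y, hy, e⟩ := ih b' _ (up x i) (D.erase i) hc
          (fun y hy => hQ y (face_up hi hy)) h1 w hw'
        exact ⟨y, face_up hi hy, e⟩
      · obtain ⟨y, hy, e⟩ := ih b' _ x (D.erase i) hc
          (fun y hy => hQ y (face_lo hi hy)) h0 w hw'
        exact ⟨y, face_lo hi hy, e⟩

def pt (t : ℤ) (x : Fin n → ℤ) : Fin (n + 1) → ℤ := Fin.cons t x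

lemma pt_zero (t : ℤ) (x : Fin n → ℤ) : pt t x 0 = t := rfl
lemma pt_succ (t : ℤ) (x : Fin n → ℤ) (i : Fin n) : pt t x i.succ = x i := rfl
lemma tail_pt (t : ℤ) (x : Fin n → ℤ) : Fin.tail (pt t x) = x := rfl

lemma up_zero (t : ℤ) (x : Fin n → ℤ) : up (pt t x) 0 = pt (t + 1) x := by
  funext i
  refine Fin.cases ?_ (fun i => ?_) i
  · simp [up_apply, pt_zero]
  · simp [up_apply, pt_succ]

lemma up_succ (t : ℤ) (x : Fin n → ℤ) (j : Fin n) : up (pt t x) j.succ = pt t (up x j) := by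
  funext i
  refine Fin.cases ?_ (fun i => ?_) i
  · simp [up_apply, pt_zero, (Fin.succ_ne_zero j).symm]
  · simp [up_apply, pt_succ]

def lift (D : Finset (Fin n)) : Finset (Fin (n + 1)) := D.map (Fin.succEmb n)

lemma zero_notMem (D : Finset (Fin n)) : (0 : Fin (n + 1)) ∉ lift D := by
  simp [lift, Fin.succ_ne_zero]

lemma succ_mem {D : Finset (Fin n)} {i : Fin n} : i.succ ∈ lift D ↔ i ∈ D := by
  simp [lift]

def prism (D : Finset (Fin n)) : Finset (Fin (n + 1)) := insert 0 (lift D)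

lemma mem_lift_cube {t : ℤ} {x : Fin n → ℤ} {D : Finset (Fin n)} {y} :
    y ∈ eCube (pt t x) (lift D) ↔ y 0 = t ∧ Fin.tail y ∈ eCube x D := by
  rw [mem_eCube, mem_eCube, Fin.forall_fin_succ]
  simp [zero_notMem, succ_mem, pt_zero, pt_succ, Fin.tail]

lemma mem_prism_cube {t : ℤ} {x : Fin n → ℤ} {D : Finset (Fin n)} {y} :
    y ∈ eCube (pt t x) (prism D) ↔ (y 0 = t ∨ y 0 = t + 1) ∧ Fin.tail y ∈ eCube x D := by
  rw [mem_eCube, mem_eCube, Fin.forall_fin_succ]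
  simp [prism, succ_mem, pt_zero, pt_succ, Fin.tail, Fin.succ_ne_zero]

lemma erase_lift (D : Finset (Fin n)) (i : Fin n) :
    (lift D).erase i.succ = lift (D.erase i) := by
  ext j
  refine Fin.cases ?_ (fun j => ?_) j
  · simp [zero_notMem]
  · simp [succ_mem]

lemma erase_prism (D : Finset (Fin n)) (i : Fin n) :
    (prism D).erase i.succ = prism (D.erase i) := by
  rw [prism, prism, Finset.erase_insert_of_ne (Fin.succ_ne_zero i).symm, erase_lift]

lemma erase_prism_zero (D : Finset (Fin n)) : (prism D).erase 0 = lift D := by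
  rw [prism, Finset.erase_insert (zero_notMem D)]

lemma sg_lift (D : Finset (Fin n)) (i : Fin n) : sg i.succ (lift D) = sg i D := by
  unfold sg lift
  rw [Finset.filter_map, Finset.card_map]
  congr 2
  ext j; rw [Finset.mem_filter, Finset.mem_filter]; simp

lemma sg_zero (D : Finset (Fin (n + 1))) : sg 0 D = 1 := by simp [sg]

lemma sg_prism (D : Finset (Fin n)) (i : Fin n) : sg i.succ (prism D) = - sg i D := by
  have := sg_erase_lt (i := i.succ) (k := 0) (D := prism D) (by simp [prism]) (Fin.succ_pos i)
  rw [erase_prism_zero, sg_lift] at this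
  linarith

lemma dd_prism (ω : Coch (n + 1)) (t : ℤ) (x : Fin n → ℤ) (D : Finset (Fin n)) :
    dd ω (pt t x) (prism D) = (ω (pt (t + 1) x) (lift D) - ω (pt t x) (lift D)) -
      ∑ i ∈ D, sg i D * (ω (pt t (up x i)) (prism (D.erase i)) -
        ω (pt t x) (prism (D.erase i))) := by
  rw [dd_apply, ← Finset.add_sum_erase _ _ (show (0 : Fin (n + 1)) ∈ prism D by simp [prism]),
    erase_prism_zero, sg_zero, up_zero, one_mul, sub_eq_add_neg _ (∑ i ∈ D, _)]
  congr 1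
  rw [lift, Finset.sum_map, ← Finset.sum_neg_distrib]
  refine Finset.sum_congr rfl fun i _ => ?_
  simp only [Fin.coe_succEmb, sg_prism, up_succ, erase_prism]
  ring

def KK (X : Finset (Fin n → ℤ)) : Finset ((Fin n → ℤ) × Finset (Fin n)) :=
  (X ×ˢ Finset.univ).filter (fun p => eCube p.1 p.2 ⊆ X)

lemma mem_KK {X : Finset (Fin n → ℤ)} {p} : p ∈ KK X ↔ eCube p.1 p.2 ⊆ X := by
  simp only [KK, Finset.mem_filter, Finset.mem_product, Finset.mem_univ, and_true,
    and_iff_right_iff_imp]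
  exact fun h => h (self_mem _ _)

lemma euler_eq (X : Finset (Fin n → ℤ)) : cubEuler X = ∑ p ∈ KK X, (-1 : ℤ) ^ p.2.card := by
  rw [KK, Finset.sum_filter, Finset.sum_product, cubEuler]

lemma sg_insert_self (j : Fin n) (D) : sg j (insert j D) = sg j D := by
  unfold sg; rw [Finset.filter_insert]; simp

lemma cancel (X : Finset (Fin n → ℤ))
    (R : (Fin n → ℤ) → Finset (Fin n) → (Fin n → ℤ) → Finset (Fin n) → ℤ)
    (τ : Fin n → ((Fin n → ℤ) ≃ (Fin n → ℤ)))
    (hface : ∀ a D i, i ∈ D → eCube (τ i a) (D.erase i) ⊆ eCube a D)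
    (hsupp : ∀ a D b E, eCube a D ⊆ X → R a D b E ≠ 0 → eCube b E ⊆ X) :
    ∑ p ∈ KK X, (-1 : ℤ) ^ p.2.card *
        ∑ i ∈ p.2, sg i p.2 * R (τ i p.1) (p.2.erase i) p.1 p.2 =
    - ∑ p ∈ KK X, (-1 : ℤ) ^ p.2.card *
        ∑ j ∈ p.2ᶜ, sg j p.2 * R p.1 p.2 ((τ j).symm p.1) (insert j p.2) := by
  rw [← Finset.sum_neg_distrib]
  simp only [Finset.mul_sum, ← Finset.sum_neg_distrib]
  rw [Finset.sum_sigma', Finset.sum_sigma']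
  symm
  refine Finset.sum_bij_ne_zero
    (fun q _ _ => ⟨((τ q.2).symm q.1.1, insert q.2 q.1.2), q.2⟩) ?_ ?_ ?_ ?_
  · rintro ⟨⟨a, D⟩, j⟩ h1 h2
    simp only [Finset.mem_sigma, mem_KK, Finset.mem_compl] at h1 ⊢
    refine ⟨hsupp a D _ _ h1.1 ?_, Finset.mem_insert_self _ _⟩
    intro h; apply h2; simp [h]
  · rintro ⟨⟨a, D⟩, j⟩ h1 h2 ⟨⟨a', D'⟩, j'⟩ h1' h2' h
    simp only [Finset.mem_sigma, mem_KK, Finset.mem_compl] at h1 h1'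
    simp only [Sigma.mk.injEq, Prod.mk.injEq, heq_eq_eq] at h
    obtain ⟨⟨e1, e2⟩, rfl⟩ := h
    have e3 := (τ j).symm.injective e1
    have e4 : D = D' := by
      rw [← Finset.erase_insert h1.2, e2, Finset.erase_insert h1'.2]
    subst e3 e4; rfl
  · rintro ⟨⟨a, D⟩, i⟩ h1 h2
    simp only [Finset.mem_sigma, mem_KK] at h1
    refine ⟨⟨(τ i a, D.erase i), i⟩, ?_, ?_, ?_⟩
    · simp only [Finset.mem_sigma, mem_KK, Finset.mem_compl]
      exact ⟨(hface a D i h1.2).trans h1.1, by simp⟩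
    · simp only [Finset.insert_erase h1.2, Equiv.symm_apply_apply]
      intro h
      apply h2
      have : R (τ i a) (D.erase i) a D = 0 := by
        have h3 : ((-1 : ℤ) ^ (D.erase i).card) ≠ 0 := pow_ne_zero _ (by norm_num)
        have h4 := sg_ne i (D.erase i)
        simpa [h3, h4] using h
      simp [this]
    · simp [Finset.insert_erase h1.2]
  · rintro ⟨⟨a, D⟩, j⟩ h1 h2
    simp only [Finset.mem_sigma, mem_KK, Finset.mem_compl] at h1
    simp only [Equiv.apply_symm_apply, Finset.erase_insert h1.2, sg_insert_self,
      Finset.card_insert_of_notMem h1.2, pow_succ]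
    ring

lemma ident {X : Finset (Fin n → ℤ)} {g : (Fin (n + 1) → ℤ) → (Fin n → ℤ)} {t : ℤ}
    (hg : ∀ y ∈ X, g (pt t y) = y) {a : Fin n → ℤ} {D : Finset (Fin n)} (hD : eCube a D ⊆ X) :
    ∀ (L : List (Fin n)), L.Pairwise (· < ·) → ∀ A : Finset (Fin n), A ⊆ D →
      (∀ j ∈ L, j ∉ A) → (∀ j ∈ D, j ∈ A ∨ j ∈ L) →
      phi g a D L (pt t (far a A)) (lift (D \ A)) = 1
  | [], _, A, hA, _, h => by
    have : D \ A = ∅ := by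
      rw [Finset.sdiff_eq_empty_iff_subset]; intro j hj; simpa using h j hj
    rw [this]; simp [phi, one, lift]
  | j :: L, hp, A, hA, hd, h => by
    rw [List.pairwise_cons] at hp
    have hX : ∀ B, B ⊆ D → far a B ∈ X := by
      intro B hB
      apply hD
      rw [mem_eCube]; intro k
      refine ⟨fun _ => ?_, fun hk => ?_⟩
      · by_cases hkB : k ∈ B <;> simp [far, hkB]
      · have : k ∉ B := fun h => hk (hB h)
        simp [far, this]
    have hjA : j ∉ A := hd j (by simp)
    by_cases hj : j ∈ D
    · have hjDA : j ∈ D \ A := by simp [hj, hjA]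
      have hup : ∀ i ∈ D \ A, up (far a A) i = far a (insert i A) := by
        intro i hi
        rw [Finset.mem_sdiff] at hi
        funext k
        by_cases hk : k = i
        · subst hk; simp [up_apply, far, hi.2]
        · simp [up_apply, far, hk]
      simp only [phi, op, hj, if_true, eps_apply]
      rw [Finset.sum_eq_single j.succ]
      · rw [sg_lift, up_succ, hup j hjDA, erase_lift]
        have e1 : (D \ A).erase j = D \ insert j A := by
          ext k; simp; tauto
        rw [e1, ident hg hD L hp.2 (insert j A) (Finset.insert_subset hj hA)]
        · have e2 : sg j (D \ A) = 1 := by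
            unfold sg
            rw [Finset.filter_eq_empty_iff.2]
            · simp
            · intro k hk
              rw [Finset.mem_sdiff] at hk
              have := h k hk.1
              simp only [hk.2, List.mem_cons, false_or] at this
              rcases this with rfl | h'
              · exact lt_irrefl _
              · exact (hp.1 k h').not_gt
          rw [e2]
          unfold uu
          rw [hg _ (hX _ (Finset.insert_subset hj hA)), hg _ (hX _ hA)]
          simp [far, hjA]
        · intro k hk hkA
          rw [Finset.mem_insert] at hkA
          rcases hkA with rfl | hkA
          · exact lt_irrefl _ (hp.1 k hk)
          · exact hd k (by simp [hk]) hkA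
        · intro k hk
          have := h k hk
          simp only [List.mem_cons] at this
          simp only [Finset.mem_insert]; tauto
      · intro i' hi' hne
        obtain ⟨i, hi, rfl⟩ := Finset.mem_map.1 hi'
        simp only [Fin.coe_succEmb] at hne ⊢
        have hij : j ≠ i := fun e => hne (by rw [e])
        have hiD := (Finset.mem_sdiff.1 hi).1
        rw [up_succ, hup i hi]
        unfold uu
        rw [hg _ (hX _ (Finset.insert_subset hiD hA)), hg _ (hX _ hA)]
        simp [far, hjA, hij]
      · intro h'; exact absurd (succ_mem.2 hjDA) h'
    · simp only [phi, op, hj, if_false, mu_apply, Pi.sub_apply, uu_sub]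
      rw [hg _ (hX _ hA), ident hg hD L hp.2 A hA (fun k hk => hd k (by simp [hk]))]
      · simp [far, hjA]
      · intro k hk
        have := h k hk
        simp only [List.mem_cons] at this
        rcases this with h' | rfl | h'
        · exact Or.inl h'
        · exact absurd hk hj
        · exact Or.inr h'

lemma trace_step {X : Finset (Fin n → ℤ)} {g : (Fin (n + 1) → ℤ) → (Fin n → ℤ)}
    {Q : Set (Fin (n + 1) → ℤ)} (hg : Cont Q g) (t : ℤ)
    (hQ : ∀ x ∈ X, pt t x ∈ Q ∧ pt (t + 1) x ∈ Q) (hgX : ∀ p ∈ Q, g p ∈ X) :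
    ∑ p ∈ KK X, (-1 : ℤ) ^ p.2.card * Phi g p.1 p.2 (pt (t + 1) p.1) (lift p.2) =
    ∑ p ∈ KK X, (-1 : ℤ) ^ p.2.card * Phi g p.1 p.2 (pt t p.1) (lift p.2) := by
  set R : (Fin n → ℤ) → Finset (Fin n) → (Fin n → ℤ) → Finset (Fin n) → ℤ :=
    fun a D b E => Phi g b E (pt t a) (prism D) with hR
  have hsub : ∀ a D, eCube a D ⊆ X → ∀ y ∈ eCube (pt t a) (prism D), y ∈ Q := by
    intro a D h y hy
    rw [mem_prism_cube] at hy
    have h1 := hQ _ (h hy.2)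
    have e : y = pt (y 0) (Fin.tail y) := (Fin.cons_self_tail y).symm
    rw [e]
    rcases hy.1 with h' | h' <;> rw [h']
    · exact h1.1
    · exact h1.2
  have hsupp : ∀ a D b E, eCube a D ⊆ X → R a D b E ≠ 0 → eCube b E ⊆ X := by
    intro a D b E h hne w hw
    obtain ⟨y, hy, rfl⟩ := surj hg _ b E (pt t a) (prism D) rfl (hsub a D h) hne w hw
    exact hgX _ (hsub a D h y hy)
  have c1 := cancel X R (fun i => Equiv.addRight (Pi.single i 1))
    (fun a D i hi => face_up hi) hsupp
  have c2 := cancel X R (fun i => Equiv.refl _) (fun a D i hi => face_lo hi) hsupp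
  have key : ∀ p ∈ KK X, Phi g p.1 p.2 (pt (t + 1) p.1) (lift p.2) =
      Phi g p.1 p.2 (pt t p.1) (lift p.2) +
      (∑ i ∈ p.2, sg i p.2 * R (up p.1 i) (p.2.erase i) p.1 p.2 -
      ∑ i ∈ p.2, sg i p.2 * R p.1 (p.2.erase i) p.1 p.2) +
      (∑ j ∈ p.2ᶜ, sg j p.2 * R p.1 p.2 (p.1 - Pi.single j 1) (insert j p.2) -
      ∑ j ∈ p.2ᶜ, sg j p.2 * R p.1 p.2 p.1 (insert j p.2)) := by
    rintro ⟨a, D⟩ _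
    have h1 := dd_prism (Phi g a D) t a D
    rw [Leib, ← Finset.sum_add_sum_compl D, Finset.sum_eq_zero (s := D), zero_add] at h1
    · have h2 : ∑ j ∈ Dᶜ, kap D j (List.finRange n) *
          (Phi g (a - Pi.single j 1) (insert j D) (pt t a) (prism D) -
            Phi g a (insert j D) (pt t a) (prism D)) =
          ∑ j ∈ Dᶜ, sg j D * R a D (a - Pi.single j 1) (insert j D) -
          ∑ j ∈ Dᶜ, sg j D * R a D a (insert j D) := by
        rw [← Finset.sum_sub_distrib]
        refine Finset.sum_congr rfl fun j hj => ?_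
        rw [kap_full (Finset.mem_compl.1 hj)]; simp only [hR]; ring
      rw [h2] at h1
      simp only [mul_sub, Finset.sum_sub_distrib] at h1
      simp only [hR] at h1 ⊢
      linarith
    · intro j hj; rw [kap_mem _ _ _ hj, zero_mul]
  rw [Finset.sum_congr rfl fun p hp => by rw [key p hp]]
  simp only [mul_add, mul_sub, Finset.sum_add_distrib, Finset.sum_sub_distrib]
  simp only [Equiv.coe_addRight, Equiv.addRight_symm, Equiv.refl_apply, Equiv.refl_symm,
    ← sub_eq_add_neg] at c1 c2
  simp only [up]
  linarith

lemma path_approx {X : Finset (Fin n → ℤ)} {f : (Fin n → ℤ) → (Fin n → ℤ)}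
    {a : Fin n → ℤ} {D : Finset (Fin n)} (hX : eCube a D ⊆ X) {v : Fin n → ℤ}
    (hv : v ∈ eCube a D) (hw : f v ∈ eCube a D) : nApproxFix X f n v := by
  refine ⟨n, fun t j => if (j : ℕ) < t then f v j else v j, le_rfl, ?_, ?_, ?_, ?_⟩
  · funext j; simp
  · funext j; simp
  · intro t _
    apply hX
    rw [mem_eCube] at hv hw ⊢
    intro j
    by_cases h : (j : ℕ) < t
    · simpa [h] using hw j
    · simpa [h] using hv j
  · intro t ht
    set i : Fin n := ⟨t, ht⟩ with hi
    have hoff : ∀ j : Fin n, j ≠ i → (if (j : ℕ) < t then f v j else v j) =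
        (if (j : ℕ) < t + 1 then f v j else v j) := by
      intro j hj
      have : (j : ℕ) ≠ t := fun h => hj (Fin.ext h)
      by_cases h : (j : ℕ) < t
      · rw [if_pos h, if_pos (by omega)]
      · rw [if_neg h, if_neg (by omega)]
    by_cases he : f v i = v i
    · left
      funext j
      by_cases hj : j = i
      · subst hj; simp [hi] at he ⊢; exact he.symm
      · exact hoff j hj
    · right
      unfold c1Adj
      rw [Finset.sum_eq_single i]
      · have h1 := mem_eCube.1 hv i
        have h2 := mem_eCube.1 hw i
        have h3 : |v i - f v i| = 1 := by
          rw [abs_eq (by norm_num)]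
          by_cases hD : i ∈ D
          · have := h1.1 hD; have := h2.1 hD; omega
          · have := h1.2 hD; have := h2.2 hD; omega
        simpa [hi] using h3
      · intro j _ hj
        simp only [hoff j hj, sub_self, abs_zero]
      · simp

lemma main (X : Finset (Fin n → ℤ)) (hχ : cubEuler X ≠ 0)
    (f : (Fin n → ℤ) → (Fin n → ℤ)) (hfid : c1Homotopic X X f id) :
    (∃ x ∈ X, f x = x) ∨
      ∃ x ∈ X, ∃ y ∈ X, x ≠ y ∧ nApproxFix X f n x ∧ nApproxFix X f n y := by
  obtain ⟨k, H, hH, h0, hk, hst, hco⟩ := hfid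
  set g : (Fin (n + 1) → ℤ) → (Fin n → ℤ) := fun p => H (Fin.tail p) (p 0).toNat with hg
  set Q : Set (Fin (n + 1) → ℤ) := {p | Fin.tail p ∈ X ∧ 0 ≤ p 0 ∧ p 0 ≤ k} with hQ
  have hgpt : ∀ (t : ℕ) x, g (pt t x) = H x t := by
    intro t x; simp [hg, pt_zero, tail_pt]
  have hcont : Cont Q g := by
    intro p i hp hpi
    obtain ⟨x, t, rfl⟩ : ∃ x t, p = pt t x := ⟨Fin.tail p, p 0, (Fin.cons_self_tail p).symm⟩
    obtain ⟨hx, ht0, htk⟩ := hp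
    rw [tail_pt] at hx
    rw [pt_zero] at ht0 htk
    lift t to ℕ using ht0
    refine Fin.cases (fun hpi => ?_) (fun i hpi => ?_) i hpi
    · rw [up_zero] at hpi ⊢
      have := hpi.2.2
      rw [pt_zero] at this
      rw [hgpt, show (t : ℤ) + 1 = ((t + 1 : ℕ) : ℤ) by push_cast; rfl, hgpt]
      exact hst x hx t (by omega)
    · rw [up_succ] at hpi ⊢
      rw [hgpt, hgpt]
      exact hco t (by omega) x hx _ hpi.1 (adj_up x i)
  have hgX : ∀ p ∈ Q, g p ∈ X := by
    rintro p ⟨h1, h2, h3⟩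
    exact hH _ h1 _ (by omega)
  have htr : ∀ t : ℕ, t ≤ k →
      ∑ p ∈ KK X, (-1 : ℤ) ^ p.2.card * Phi g p.1 p.2 (pt t p.1) (lift p.2) =
      ∑ p ∈ KK X, (-1 : ℤ) ^ p.2.card * Phi g p.1 p.2 (pt (0 : ℕ) p.1) (lift p.2) := by
    intro t
    induction t with
    | zero => intro _; rfl
    | succ t ih =>
      intro ht
      rw [← ih (by omega), Nat.cast_succ]
      refine trace_step hcont t (fun x hx => ⟨⟨hx, ?_, ?_⟩, ⟨hx, ?_, ?_⟩⟩) hgX <;>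
        rw [pt_zero] <;> omega
  have hK := htr k le_rfl
  have hE : ∑ p ∈ KK X, (-1 : ℤ) ^ p.2.card * Phi g p.1 p.2 (pt k p.1) (lift p.2) =
      cubEuler X := by
    rw [euler_eq]
    refine Finset.sum_congr rfl fun p hp => ?_
    have := ident (t := k) (g := g) (fun y hy => by rw [hgpt, hk y hy]; rfl) (mem_KK.1 hp)
      (List.finRange n) (List.pairwise_lt_finRange n) ∅ (by simp) (by simp) (by simp)
    rw [far_empty, Finset.sdiff_empty] at this
    rw [Phi, this, mul_one]
  rw [← hE, hK] at hχ
  obtain ⟨⟨a, D⟩, hp, hne⟩ := Finset.exists_ne_zero_of_sum_ne_zero hχ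
  have hD : eCube a D ⊆ X := mem_KK.1 hp
  have hne := right_ne_zero_of_mul hne
  simp only at hne
  have hends := Ends hcont (fun y hy => by
    rw [mem_lift_cube] at hy
    exact ⟨hD hy.2, by rw [hy.1]; simp, by rw [hy.1]; simp⟩) hne
  have hfar : far (pt ((0 : ℕ) : ℤ) a) (lift D) = pt ((0 : ℕ) : ℤ) (far a D) := by
    funext i
    refine Fin.cases ?_ (fun i => ?_) i
    · simp [far, pt_zero, zero_notMem]
    · simp [far, pt_succ, succ_mem]
  rw [hfar] at hends
  simp only [hgpt] at hends
  have ha := hD (self_mem a D)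
  have hb := hD (far_mem a D)
  rw [h0 a ha, h0 _ hb] at hends
  have hfa : f a ∈ eCube a D := by
    rw [mem_eCube]; intro j
    exact ⟨fun h => by have := (hends j).1 h; omega, fun h => ((hends j).2 h).1⟩
  have hfb : f (far a D) ∈ eCube a D := by
    rw [mem_eCube]; intro j
    exact ⟨fun h => by have := (hends j).1 h; omega, fun h => ((hends j).2 h).2⟩
  rcases D.eq_empty_or_nonempty with rfl | ⟨j, hj⟩
  · left
    exact ⟨a, ha, funext fun j => ((hends j).2 (by simp)).1⟩
  · right
    refine ⟨a, ha, far a D, hb, ?_, path_approx hD (self_mem a D) hfa,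
      path_approx hD (far_mem a D) hfb⟩
    intro h
    have := congrFun h j
    simp [far, hj] at this

end CubLef

/-- Let `X ⊆ ℤ^n` be a finite digital image with `c1`-adjacency, `n ≤ 3`, whose cubical
Euler characteristic `χ̄(X)` is nonzero, and let `f : X → X` be a `c1`-continuous self-map
homotopic to the identity. Then `f` has a fixed point or at least two distinct
`n`-approximate fixed points. -/
theorem fixed_or_napprox_of_homotopic_id {n : ℕ} (hn : n ≤ 3) (X : Finset (Fin n → ℤ))
    (hχ : cubEuler X ≠ 0)
    (f : (Fin n → ℤ) → (Fin n → ℤ))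
    (hfX : MapsInto X X f) (hf : c1Cont X f)
    (hfid : c1Homotopic X X f id) :
    (∃ x ∈ X, f x = x) ∨
      ∃ x ∈ X, ∃ y ∈ X, x ≠ y ∧ nApproxFix X f n x ∧ nApproxFix X f n y := by
  exact CubLef.main X hχ f hfid
end

section
/- Let X ⊆ ℤ^n be a finite contractible digital image with c1-adjacency, where n ≤ 3. Then every c1-continuous self-map f : X → X has a fixed point or has at least two distinct n-approximate fixed points. -/
/-- `X` is contractible: the identity map of `X` is homotopic to a constant self-map. -/
def c1Contractible {n : ℕ} (X : Finset (Fin n → ℤ)) : Prop :=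
  ∃ x₀ ∈ X, c1Homotopic X X id (fun _ => x₀)

set_option linter.unusedSectionVars false

section loc
variable {ι κ : Type} [DecidableEq ι] [DecidableEq κ]

noncomputable def ind (P : Prop) : ZMod 2 := by classical exact if P then 1 else 0

theorem ind_t {P : Prop} (h : P) : ind P = 1 := by simp [ind, h]
theorem ind_f {P : Prop} (h : ¬ P) : ind P = 0 := by simp [ind, h]
theorem ind_congr {P Q : Prop} (h : P ↔ Q) : ind P = ind Q := by rw [propext h]
theorem ind_of_ne {P : Prop} (h : ind P ≠ 0) : P := by
  by_contra h'; exact h (ind_f h')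
theorem z2_add_self (a : ZMod 2) : a + a = 0 := by revert a; decide
theorem z2_eq {a b : ZMod 2} (h : a + b = 0) : a = b := by revert a b; decide

def flp (l : ι) (x : ι → Bool) : ι → Bool := Function.update x l (!x l)
def InC (D : Finset ι) (x0 x : ι → Bool) : Prop := ∀ i, i ∉ D → x i = x0 i
def Bij (p : κ → ι) (E : Finset κ) (D : Finset ι) : Prop :=
  (∀ j ∈ E, p j ∈ D) ∧ (∀ i ∈ E, ∀ j ∈ E, p i = p j → i = j) ∧ (∀ d ∈ D, ∃ j ∈ E, p j = d)

theorem flp_same (l : ι) (x : ι → Bool) : flp l x l = !x l := by simp [flp]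
theorem flp_ne {l i : ι} (x : ι → Bool) (h : i ≠ l) : flp l x i = x i := by simp [flp, h]
theorem flp_flp (l : ι) (x : ι → Bool) : flp l (flp l x) = x := by
  funext i; by_cases h : i = l
  · subst h; simp [flp_same]
  · simp [flp_ne _ h]

theorem inC_flp {D : Finset ι} {x0 x : ι → Bool} {l : ι} (hl : l ∈ D) (h : InC D x0 x) :
    InC D x0 (flp l x) := by
  intro i hi
  have : i ≠ l := by rintro rfl; exact hi hl
  rw [flp_ne _ this, h i hi]

theorem inC_face {D : Finset ι} {x0 x : ι → Bool} {l : ι} {δ : Bool} (hl : l ∈ D) :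
    InC (D.erase l) (Function.update x0 l δ) x ↔ InC D x0 x ∧ x l = δ := by
  constructor
  · intro h
    refine ⟨fun i hi => ?_, ?_⟩
    · have : i ≠ l := by rintro rfl; exact hi hl
      rw [h i (by simp [hi]), Function.update_of_ne this]
    · rw [h l (by simp), Function.update_self]
  · rintro ⟨h, rfl⟩ i hi
    by_cases e : i = l
    · subst e; simp
    · rw [Function.update_of_ne e]; exact h i (by simpa [e] using hi)

theorem bij_erase {p : κ → ι} {E : Finset κ} {D : Finset ι} {j : κ} (h : Bij p E D) (hj : j ∈ E) :
    Bij p (E.erase j) (D.erase (p j)) := by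
  obtain ⟨h1, h2, h3⟩ := h
  refine ⟨?_, ?_, ?_⟩ <;> grind

theorem bij_insert {p : κ → ι} {E : Finset κ} {D : Finset ι} {j : κ} {l : ι}
    (h : Bij p (E.erase j) (D.erase l)) (hj : j ∈ E) (hl : l ∈ D) :
    Bij (Function.update p j l) E D := by
  obtain ⟨h1, h2, h3⟩ := h
  refine ⟨?_, ?_, ?_⟩
  · grind [Function.update_apply]
  · grind [Function.update_apply]
  · intro d hd
    by_cases e : d = l
    · exact ⟨j, hj, by simp [e]⟩
    · obtain ⟨i, hi, hi'⟩ := h3 d (by simp [e, hd])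
      exact ⟨i, by grind, by grind [Function.update_apply]⟩

theorem const_of_flp {α : Type} (D : Finset ι) (x0 : ι → Bool) (g : (ι → Bool) → α)
    (h : ∀ x, InC D x0 x → ∀ l ∈ D, g (flp l x) = g x) : ∀ x, InC D x0 x → g x = g x0 := by
  induction D using Finset.induction_on with
  | empty =>
    intro x hx
    have : x = x0 := funext fun i => hx i (by simp)
    rw [this]
  | insert l D hl ih =>
    have ih' := ih (fun x hx k hk => h x (fun i hi => hx i (by simp at hi; exact hi.2)) k (by simp [hk]))
    intro x hx
    by_cases e : x l = x0 l
    · apply ih'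
      intro i hi
      by_cases e' : i = l
      · rw [e', e]
      · exact hx i (by simp [e', hi])
    · rw [← h x hx l (by simp)]
      apply ih'
      intro i hi
      by_cases e' : i = l
      · rw [e', flp_same]; revert e; cases x l <;> cases x0 l <;> simp
      · rw [flp_ne _ e']; exact hx i (by simp [e', hi])

def BIso (D : Finset ι) (x0 : ι → Bool) (Φ : (ι → Bool) → κ → Bool) (E : Finset κ) : Prop :=
  ∃ (p : κ → ι) (c : κ → Bool), Bij p E D ∧
    ∀ x, InC D x0 x → ∀ j ∈ E, Φ x j = xor (x (p j)) (c j)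

def GM (Φ : (ι → Bool) → κ → Bool) : Prop :=
  ∀ x l i j, Φ x i ≠ Φ (flp l x) i → Φ x j ≠ Φ (flp l x) j → i = j

def FA (D : Finset ι) (x0 : ι → Bool) (Φ : (ι → Bool) → κ → Bool) (E : Finset κ) (j : κ) (b : Bool) :
    Prop := BIso D x0 Φ (E.erase j) ∧ ∀ x, InC D x0 x → Φ x j = b

theorem inC_self (D : Finset ι) (x0 : ι → Bool) : InC D x0 x0 := fun _ _ => rfl

theorem FA_split (D : Finset ι) (x0 : ι → Bool) (Φ : (ι → Bool) → κ → Bool) (hΦ : GM Φ)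
    (E : Finset κ) (j : κ) :
    ind (BIso D x0 Φ (E.erase j)) = ind (FA D x0 Φ E j false) + ind (FA D x0 Φ E j true) := by
  by_cases h : BIso D x0 Φ (E.erase j)
  · have hc : ∀ x, InC D x0 x → Φ x j = Φ x0 j := by
      apply const_of_flp D x0 (fun x => Φ x j)
      intro x hx l hl
      obtain ⟨p, c, ⟨h1, h2, h3⟩, h4⟩ := h
      obtain ⟨i, hi, rfl⟩ := h3 l hl
      by_contra hne
      have : j = i := by
        apply hΦ x (p i) j i (fun e => hne e.symm)
        rw [h4 x hx i hi, h4 _ (inC_flp hl hx) i hi, flp_same]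
        cases x (p i) <;> cases c i <;> simp
      subst this
      simp at hi
    rw [ind_t h]
    cases hb : Φ x0 j
    · rw [ind_t ⟨h, fun x hx => (hc x hx).trans hb⟩, ind_f]
      · simp
      · rintro ⟨_, h'⟩
        have := h' x0 (inC_self _ _); simp [hb] at this
    · rw [add_comm, ind_t ⟨h, fun x hx => (hc x hx).trans hb⟩, ind_f]
      · simp
      · rintro ⟨_, h'⟩
        have := h' x0 (inC_self _ _); simp [hb] at this
  · rw [ind_f h, ind_f (fun h' => h h'.1), ind_f (fun h' => h h'.1)]; simp

theorem sum_single2 (D : Finset ι) (F : ι → Bool → Prop) (l0 : ι) (hl0 : l0 ∈ D) (δ0 : Bool)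
    (h0 : F l0 δ0) (h : ∀ l ∈ D, ∀ δ, F l δ → l = l0 ∧ δ = δ0) :
    ∑ l ∈ D, ∑ δ : Bool, ind (F l δ) = 1 := by
  rw [Finset.sum_eq_single_of_mem l0 hl0, Finset.sum_eq_single_of_mem δ0 (Finset.mem_univ _),
    ind_t h0]
  · intro δ _ hne
    exact ind_f fun h' => hne (h l0 hl0 δ h').2
  · intro l hl hne
    exact Finset.sum_eq_zero fun δ _ => ind_f fun h' => hne (h l hl δ h').1

theorem exists_of_sum {D : Finset ι} {F : ι → Bool → Prop}
    (h : ∑ l ∈ D, ∑ δ : Bool, ind (F l δ) ≠ 0) : ∃ l ∈ D, ∃ δ, F l δ := by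
  obtain ⟨l, hl, h⟩ := Finset.exists_ne_zero_of_sum_ne_zero h
  obtain ⟨δ, _, h⟩ := Finset.exists_ne_zero_of_sum_ne_zero h
  exact ⟨l, hl, δ, ind_of_ne h⟩

/-- two faces in different directions meet -/
theorem faces_meet {D : Finset ι} (x0 : ι → Bool) {l l' : ι} (hl : l ∈ D) (hl' : l' ∈ D)
    (δ δ' : Bool) (h : l = l' → δ = δ') :
    ∃ x, InC (D.erase l) (Function.update x0 l δ) x ∧
      InC (D.erase l') (Function.update x0 l' δ') x := by
  refine ⟨Function.update (Function.update x0 l δ) l' δ', ?_, ?_⟩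
  · rw [inC_face hl]
    refine ⟨fun i hi => ?_, ?_⟩
    · rw [Function.update_of_ne (by grind), Function.update_of_ne (by grind)]
    · grind [Function.update_apply]
  · rw [inC_face hl']
    refine ⟨fun i hi => ?_, ?_⟩
    · rw [Function.update_of_ne (by grind), Function.update_of_ne (by grind)]
    · simp

theorem step_L (D : Finset ι) (x0 : ι → Bool) (Φ : (ι → Bool) → κ → Bool) (hΦ : GM Φ)
    (E : Finset κ) (j : κ) (hj : j ∈ E)
    (T : ∑ l ∈ D, ∑ δ : Bool, ind (BIso (D.erase l) (Function.update x0 l δ) Φ (E.erase j)) = 0) :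
    ∑ l ∈ D, ∑ δ : Bool, ind (FA (D.erase l) (Function.update x0 l δ) Φ E j false)
      = ind (BIso D x0 Φ E) := by
  by_cases hI : BIso D x0 Φ E
  · rw [ind_t hI]
    obtain ⟨p, c, hp, hc⟩ := hI
    have hpj := hp.1 j hj
    apply sum_single2 D _ (p j) hpj (c j)
    · refine ⟨⟨p, c, bij_erase hp hj, ?_⟩, ?_⟩
      · intro x hx i hi
        exact hc x ((inC_face hpj).1 hx).1 i (Finset.mem_of_mem_erase hi)
      · intro x hx
        rw [inC_face hpj] at hx
        rw [hc x hx.1 j hj, hx.2]; simp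
    · rintro l hl δ ⟨_, h⟩
      have hl0 : l = p j := by
        by_contra hne
        obtain ⟨x, hx, hx'⟩ := faces_meet x0 hl hpj δ (!c j) (fun e => absurd e hne)
        have h1 := h x hx
        rw [inC_face hpj] at hx'
        rw [hc x hx'.1 j hj, hx'.2] at h1
        simp at h1
      refine ⟨hl0, ?_⟩
      subst hl0
      have h1 := h _ (inC_self _ _)
      rw [hc _ ((inC_face hpj).1 (inC_self _ _)).1 j hj] at h1
      simpa using h1
  · rw [ind_f hI]
    by_contra hne
    have hsum : ∑ l ∈ D, ∑ δ : Bool, ind (FA (D.erase l) (Function.update x0 l δ) Φ E j false)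
        = ∑ l ∈ D, ∑ δ : Bool, ind (FA (D.erase l) (Function.update x0 l δ) Φ E j true) := by
      apply z2_eq
      rw [← T, ← Finset.sum_add_distrib]
      refine Finset.sum_congr rfl fun l _ => ?_
      rw [← Finset.sum_add_distrib]
      refine Finset.sum_congr rfl fun δ _ => ?_
      rw [FA_split _ _ _ hΦ]
    obtain ⟨l, hl, δ, hA⟩ := exists_of_sum hne
    rw [hsum] at hne
    obtain ⟨l', hl', δ', hB⟩ := exists_of_sum hne
    have key : ¬ (l = l' → δ = δ') := by
      intro e
      obtain ⟨x, hx, hx'⟩ := faces_meet x0 hl hl' δ δ' e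
      have := hA.2 x hx
      rw [hB.2 x hx'] at this
      simp at this
    push Not at key
    obtain ⟨rfl, hδ⟩ := key
    have hδ' : δ' = !δ := by revert hδ; cases δ <;> cases δ' <;> simp
    subst hδ'
    apply hI
    obtain ⟨⟨p, c, hp, hc⟩, hf⟩ := hA
    have ht := hB.2
    refine ⟨Function.update p j l, Function.update c j δ, bij_insert hp hj hl, ?_⟩
    have hj' : ∀ x, InC D x0 x → Φ x j = xor (x l) δ := by
      intro x hx
      by_cases e : x l = δ
      · rw [hf x ((inC_face hl).2 ⟨hx, e⟩), e]; simp
      · have e' : x l = !δ := by revert e; cases δ <;> cases x l <;> simp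
        rw [ht x ((inC_face hl).2 ⟨hx, e'⟩), e']; cases δ <;> simp
    intro x hx i hi
    by_cases e : i = j
    · subst e; simp [hj' x hx]
    · rw [Function.update_of_ne e, Function.update_of_ne e]
      have hi' : i ∈ E.erase j := by simp [e, hi]
      by_cases e2 : x l = δ
      · exact hc x ((inC_face hl).2 ⟨hx, e2⟩) i hi'
      · have e' : flp l x l = δ := by rw [flp_same]; revert e2; cases δ <;> cases x l <;> simp
        have hpl : p i ≠ l := by have := hp.1 i hi'; grind
        have h1 := hc (flp l x) ((inC_face hl).2 ⟨inC_flp hl hx, e'⟩) i hi'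
        rw [flp_ne _ hpl] at h1
        rw [← h1]
        by_contra hne'
        apply e
        apply hΦ x l i j hne'
        rw [hj' x hx, hj' _ (inC_flp hl hx), flp_same]
        cases x l <;> cases δ <;> simp

theorem sum_sym (D : Finset ι) (F : ι → Bool → ι → Bool → ZMod 2)
    (hF : ∀ l δ l' δ', l ≠ l' → F l δ l' δ' = F l' δ' l δ) :
    ∑ l ∈ D, ∑ δ : Bool, ∑ l' ∈ D.erase l, ∑ δ' : Bool, F l δ l' δ' = 0 := by
  have : ∑ l ∈ D, ∑ δ : Bool, ∑ l' ∈ D.erase l, ∑ δ' : Bool, F l δ l' δ'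
      = ∑ q ∈ D.offDiag, ∑ r : Bool × Bool, F q.1 r.1 q.2 r.2 := by
    have h1 : D.offDiag = (D ×ˢ D).filter (fun q => q.1 ≠ q.2) := by ext ⟨a, b⟩; simp [and_assoc]
    rw [h1, Finset.sum_filter, Finset.sum_product]
    refine Finset.sum_congr rfl fun l _ => ?_
    rw [Finset.sum_comm]
    rw [← Finset.sum_filter]
    have : D.filter (fun a => l ≠ a) = D.erase l := by ext a; simp [and_comm, eq_comm]
    simp only [this]
    refine Finset.sum_congr rfl fun l' _ => ?_
    rw [Fintype.sum_prod_type]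
  rw [this]
  refine Finset.sum_involution (fun q _ => (q.2, q.1)) ?_ ?_ ?_ ?_
  · rintro ⟨a, b⟩ h
    simp only [Finset.mem_offDiag] at h
    have : ∑ r : Bool × Bool, F b r.1 a r.2 = ∑ r : Bool × Bool, F a r.1 b r.2 := by
      rw [← Equiv.sum_comp (Equiv.prodComm Bool Bool)]
      refine Finset.sum_congr rfl fun r _ => ?_
      simp [hF b r.2 a r.1 (Ne.symm h.2.2)]
    simp only [this, z2_add_self]
  · rintro ⟨a, b⟩ h _ e
    simp at h e
    exact h.2.2 e.2
  · rintro ⟨a, b⟩ h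
    simp at h ⊢
    exact ⟨h.2.1, h.1, Ne.symm h.2.2⟩
  · rintro ⟨a, b⟩ h; rfl

theorem lem_T (Φ : (ι → Bool) → κ → Bool) (hΦ : GM Φ) (m : ℕ) :
    ∀ (D : Finset ι) (E : Finset κ) (x0 : ι → Bool), E.card = m → D.card = m + 1 →
    ∑ l ∈ D, ∑ δ : Bool, ind (BIso (D.erase l) (Function.update x0 l δ) Φ E) = 0 := by
  induction m with
  | zero =>
    intro D E x0 hE hD
    obtain ⟨l, rfl⟩ := Finset.card_eq_one.1 hD
    have := Finset.card_eq_zero.1 hE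
    subst this
    have : ∀ δ, BIso (({l} : Finset ι).erase l) (Function.update x0 l δ) Φ ∅ := by
      intro δ
      exact ⟨fun _ => l, fun _ => true, ⟨by simp, by simp, by simp⟩, by simp⟩
    rw [Finset.sum_singleton, Fintype.sum_bool, ind_t (this _), ind_t (this _), z2_add_self]
  | succ m ih =>
    intro D E x0 hE hD
    obtain ⟨j, hj⟩ : E.Nonempty := Finset.card_pos.1 (by omega)
    have hE' : (E.erase j).card = m := by rw [Finset.card_erase_of_mem hj]; omega
    have : ∀ l ∈ D, ∀ δ : Bool, ind (BIso (D.erase l) (Function.update x0 l δ) Φ E)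
        = ∑ l' ∈ D.erase l, ∑ δ' : Bool, ind (FA ((D.erase l).erase l')
          (Function.update (Function.update x0 l δ) l' δ') Φ E j false) := by
      intro l hl δ
      rw [step_L _ _ _ hΦ E j hj]
      exact ih _ _ _ hE' (by rw [Finset.card_erase_of_mem hl]; omega)
    rw [Finset.sum_congr rfl fun l hl => Finset.sum_congr rfl fun δ _ => this l hl δ]
    apply sum_sym D (fun l δ l' δ' => ind (FA ((D.erase l).erase l')
          (Function.update (Function.update x0 l δ) l' δ') Φ E j false))
    intro l δ l' δ' hne
    rw [Finset.erase_right_comm, Function.update_comm hne]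


def EIso (D : Finset ι) (x0 : ι → Bool) (φ : (ι → Bool) → κ → ℤ) (a : κ → ℤ) (E : Finset κ) : Prop :=
  ∃ (p : κ → ι) (c : κ → Bool), Bij p E D ∧
    ∀ x, InC D x0 x → ∀ j, φ x j = a j + if j ∈ E ∧ xor (x (p j)) (c j) = true then 1 else 0

def AdjM (φ : (ι → Bool) → κ → ℤ) : Prop :=
  ∀ x l, (∀ j, |φ x j - φ (flp l x) j| ≤ 1) ∧
    ∀ i j, φ x i ≠ φ (flp l x) i → φ x j ≠ φ (flp l x) j → i = j

def thr (φ : (ι → Bool) → κ → ℤ) (a : κ → ℤ) : (ι → Bool) → κ → Bool :=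
  fun x j => decide (a j < φ x j)

def sh (a : κ → ℤ) (j : κ) (η : Bool) : κ → ℤ := fun i => a i - if i = j ∧ η = true then 1 else 0

theorem gm_thr {φ : (ι → Bool) → κ → ℤ} (h : AdjM φ) (a : κ → ℤ) : GM (thr φ a) := by
  intro x l i j hi hj
  refine (h x l).2 i j (fun e => hi ?_) (fun e => hj ?_)
  · simp [thr, e]
  · simp [thr, e]

theorem biso_of_eiso {D : Finset ι} {x0 : ι → Bool} {φ : (ι → Bool) → κ → ℤ} {a : κ → ℤ}
    {E : Finset κ} (h : EIso D x0 φ a E) : BIso D x0 (thr φ a) E := by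
  obtain ⟨p, c, hp, hc⟩ := h
  refine ⟨p, c, hp, fun x hx j hj => ?_⟩
  simp only [thr, hc x hx j, hj, true_and]
  cases (xor (x (p j)) (c j)) <;> simp

theorem eiso_of_biso {D : Finset ι} {x0 : ι → Bool} {φ : (ι → Bool) → κ → ℤ} (hφ : AdjM φ)
    {a : κ → ℤ} {E : Finset κ} (h : BIso D x0 (thr φ a) E) :
    ∃ u : κ → ℤ, (∀ j ∈ E, u j = a j) ∧ EIso D x0 φ u E := by
  obtain ⟨p, c, hp, hc⟩ := h
  have flips : ∀ x, InC D x0 x → ∀ j ∈ E, thr φ a x j ≠ thr φ a (flp (p j) x) j := by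
    intro x hx j hj
    rw [hc x hx j hj, hc _ (inC_flp (hp.1 j hj) hx) j hj, flp_same]
    cases x (p j) <;> cases c j <;> simp
  refine ⟨fun j => if j ∈ E then a j else φ x0 j, fun j hj => by simp [hj], p, c, hp, ?_⟩
  intro x hx j
  by_cases hj : j ∈ E
  · have h1 := flips x hx j hj
    have h2 := (hφ x (p j)).1 j
    have h3 := hc x hx j hj
    rw [abs_le] at h2
    simp only [hj, true_and, if_true, ← h3]
    simp only [thr, ne_eq, decide_eq_decide, decide_eq_true_eq] at h1 ⊢
    split_ifs <;> omega
  · simp only [hj, false_and, if_false, add_zero]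
    refine const_of_flp D x0 (fun x => φ x j) ?_ x hx
    intro x hx l hl
    obtain ⟨i, hi, rfl⟩ := hp.2.2 l hl
    by_contra hne
    have : j = i := by
      apply (hφ x (p i)).2 j i (fun e => hne e.symm)
      intro e
      apply flips x hx i hi
      simp [thr, ← e]
    exact hj (this ▸ hi)

theorem lem_LE_one {D : Finset ι} {x0 : ι → Bool} {φ : (ι → Bool) → κ → ℤ}
    {a : κ → ℤ} {E : Finset κ} {j : κ} {η : Bool} (hj : j ∉ E)
    (h : EIso D x0 φ (sh a j η) (insert j E)) :
    ∑ l ∈ D, ∑ δ : Bool, ind (EIso (D.erase l) (Function.update x0 l δ) φ a E) = 1 := by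
  obtain ⟨p, c, hp, hc⟩ := h
  have hpj : p j ∈ D := hp.1 j (by simp)
  have hcj : ∀ x, InC D x0 x → φ x j = a j → x (p j) = xor η (c j) := by
    intro x hx e
    have := hc x hx j
    rw [e] at this
    revert this
    cases η <;> cases x (p j) <;> cases c j <;> simp [sh] <;> omega
  have hjc : ∀ x, InC D x0 x → x (p j) = xor η (c j) → φ x j = a j := by
    intro x hx e
    have := hc x hx j
    rw [e] at this
    rw [this]
    cases η <;> cases c j <;> simp [sh]
  apply sum_single2 D _ (p j) hpj (xor η (c j))
  · refine ⟨p, c, ?_, ?_⟩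
    · have := bij_erase hp (Finset.mem_insert_self j E)
      rwa [Finset.erase_insert hj] at this
    · intro x hx i
      rw [inC_face hpj] at hx
      by_cases e : i = j
      · subst e
        rw [hjc x hx.1 hx.2]; simp [hj]
      · rw [hc x hx.1 i]; simp [sh, e]
  · rintro l hl δ ⟨p', c', hp', hc'⟩
    have hface : ∀ x, InC (D.erase l) (Function.update x0 l δ) x → x (p j) = xor η (c j) := by
      intro x hx
      apply hcj x ((inC_face hl).1 hx).1
      rw [hc' x hx j]; simp [hj]
    have hl0 : l = p j := by
      by_contra hne
      obtain ⟨x, hx, hx'⟩ := faces_meet x0 hl hpj δ (!(xor η (c j))) (fun e => absurd e hne)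
      have h1 := hface x hx
      rw [inC_face hpj] at hx'
      rw [hx'.2] at h1
      simp at h1
    refine ⟨hl0, ?_⟩
    subst hl0
    have h1 := hface _ (inC_self _ _)
    simpa using h1

theorem eiso_uniq {D : Finset ι} {x0 : ι → Bool} {φ : (ι → Bool) → κ → ℤ}
    {a : κ → ℤ} {E : Finset κ} {j j' : κ} {η η' : Bool} (hj : j ∉ E)
    (h : EIso D x0 φ (sh a j η) (insert j E))
    (h' : EIso D x0 φ (sh a j' η') (insert j' E)) : j' = j ∧ η' = η := by
  obtain ⟨p, c, hp, hc⟩ := h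
  obtain ⟨p', c', hp', hc'⟩ := h'
  have hpj : p j ∈ D := hp.1 j (by simp)
  have h1 := hc x0 (inC_self _ _) j
  have h2 := hc _ (inC_flp hpj (inC_self _ _)) j
  have h1' := hc' x0 (inC_self _ _) j
  have h2' := hc' _ (inC_flp hpj (inC_self _ _)) j
  rw [flp_same] at h2
  by_cases e : j' = j
  · subst e
    refine ⟨rfl, ?_⟩
    rw [h1] at h1'
    rw [h2] at h2'
    revert h1' h2'
    simp only [sh]
    cases η <;> cases η' <;> cases x0 (p j') <;> cases c j' <;> simp <;> intros <;> split_ifs at * <;> omega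
  · exfalso
    have e' : ¬ j = j' := fun h => e h.symm
    rw [h1] at h1'
    rw [h2] at h2'
    revert h1' h2'
    simp only [sh, e', hj, Finset.mem_insert]
    cases η <;> cases x0 (p j) <;> cases c j <;> simp

theorem lem_LE [Fintype κ] {φ : (ι → Bool) → κ → ℤ} (hφ : AdjM φ)
    (D : Finset ι) (E : Finset κ) (x0 : ι → Bool) (a : κ → ℤ) (hD : D.card = E.card + 1) :
    ∑ l ∈ D, ∑ δ : Bool, ind (EIso (D.erase l) (Function.update x0 l δ) φ a E)
      = ∑ j : κ, ∑ η : Bool, ind (j ∉ E ∧ EIso D x0 φ (sh a j η) (insert j E)) := by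
  by_cases hR : ∃ j η, j ∉ E ∧ EIso D x0 φ (sh a j η) (insert j E)
  · obtain ⟨j, η, hj, h⟩ := hR
    rw [lem_LE_one hj h]
    symm
    apply sum_single2 Finset.univ _ j (Finset.mem_univ _) η ⟨hj, h⟩
    rintro j' _ η' ⟨_, h'⟩
    exact eiso_uniq hj h h'
  · have hz : ∑ j : κ, ∑ η : Bool, ind (j ∉ E ∧ EIso D x0 φ (sh a j η) (insert j E)) = 0 :=
      Finset.sum_eq_zero fun j _ => Finset.sum_eq_zero fun η _ => ind_f fun h => hR ⟨j, η, h⟩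
    rw [hz]
    by_contra hne
    have T := lem_T (thr φ a) (gm_thr hφ a) E.card D E x0 rfl hD
    have hbad : ∃ l ∈ D, ∃ δ, BIso (D.erase l) (Function.update x0 l δ) (thr φ a) E ∧
        ¬ EIso (D.erase l) (Function.update x0 l δ) φ a E := by
      by_contra hall
      push Not at hall
      apply hne
      rw [← T]
      refine Finset.sum_congr rfl fun l hl => Finset.sum_congr rfl fun δ _ => ?_
      exact ind_congr ⟨biso_of_eiso, hall l hl δ⟩
    obtain ⟨l, hl, δ, p, c, hp, hc⟩ := exists_of_sum hne
    obtain ⟨l', hl', δ', hB, hnB⟩ := hbad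
    obtain ⟨u, hu, hB'⟩ := eiso_of_biso hφ hB
    have hua : ∃ j, u j ≠ a j := by
      by_contra hall
      push Not at hall
      have : u = a := funext hall
      subst this
      exact hnB hB'
    obtain ⟨j, huj⟩ := hua
    have hjE : j ∉ E := fun h => huj (hu j h)
    have hbj : ∀ x, InC (D.erase l') (Function.update x0 l' δ') x → φ x j = u j := by
      obtain ⟨p', c', hp', hc'⟩ := hB'
      intro x hx
      rw [hc' x hx j]; simp [hjE]
    have hgj : ∀ x, InC (D.erase l) (Function.update x0 l δ) x → φ x j = a j := by
      intro x hx
      rw [hc x hx j]; simp [hjE]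
    have key : ¬ (l = l' → δ = δ') := by
      intro e
      obtain ⟨x, hx, hx'⟩ := faces_meet x0 hl hl' δ δ' e
      exact huj ((hbj x hx').symm.trans (hgj x hx))
    push Not at key
    obtain ⟨rfl, hδ⟩ := key
    have hδ' : δ' = !δ := by revert hδ; cases δ <;> cases δ' <;> simp
    subst hδ'
    apply hR
    have hflip : ∀ x, InC D x0 x → x l ≠ δ →
        InC (D.erase l) (Function.update x0 l δ) (flp l x) ∧ φ x j = u j := by
      intro x hx e
      have e1 : x l = !δ := by revert e; cases δ <;> cases x l <;> simp
      refine ⟨(inC_face hl).2 ⟨inC_flp hl hx, ?_⟩, hbj x ((inC_face hl).2 ⟨hx, e1⟩)⟩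
      rw [flp_same, e1]; simp
    have hu1 : |u j - a j| ≤ 1 := by
      have hx0 : InC D x0 (Function.update x0 l (!δ)) := ((inC_face hl).1 (inC_self _ _)).1
      obtain ⟨h1, h2⟩ := hflip _ hx0 (by simp)
      have := (hφ (Function.update x0 l (!δ)) l).1 j
      rwa [h2, hgj _ h1] at this
    rw [abs_le] at hu1
    refine ⟨j, decide (u j < a j), hjE, Function.update p j l,
      Function.update c j (xor δ (decide (u j < a j))), ?_, ?_⟩
    · apply bij_insert _ (Finset.mem_insert_self _ _) hl
      rwa [Finset.erase_insert hjE]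
    · intro x hx i
      by_cases e : x l = δ
      · have hx' := (inC_face hl).2 ⟨hx, e⟩
        by_cases ei : i = j
        · subst ei
          rw [hgj x hx']
          simp [sh, e]
        · rw [hc x hx' i]
          simp [sh, ei]
      · obtain ⟨h1, h2⟩ := hflip x hx e
        have e1 : x l = !δ := by revert e; cases δ <;> cases x l <;> simp
        by_cases ei : i = j
        · subst ei
          rw [h2]
          simp only [sh, Function.update_self, e1]
          by_cases hlt : u i < a i
          · cases δ <;> simp [hlt] <;> omega
          · cases δ <;> simp [hlt] <;> omega
        · have : φ x i = φ (flp l x) i := by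
            by_contra hne
            apply ei
            apply (hφ x l).2 i j hne
            rw [h2, hgj _ h1]; exact huj
          rw [this, hc _ h1 i]
          simp only [sh, ei, Function.update_of_ne (Ne.intro ei), Finset.mem_insert, false_or]
          by_cases hiE : i ∈ E
          · have hpl : p i ≠ l := by have := hp.1 i hiE; grind
            rw [flp_ne _ hpl]; simp
          · simp [hiE]

end loc

section glob
variable {n : ℕ}

def pt (a : Fin n → ℤ) (D : Finset (Fin n)) (x : Fin n → Bool) : Fin n → ℤ :=
  fun i => a i + if i ∈ D ∧ x i = true then 1 else 0

def CubeIn (X : Finset (Fin n → ℤ)) (a : Fin n → ℤ) (D : Finset (Fin n)) : Prop :=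
  ∀ x, pt a D x ∈ X

open Classical in
noncomputable def KK (X : Finset (Fin n → ℤ)) : Finset ((Fin n → ℤ) × Finset (Fin n)) :=
  (X ×ˢ Finset.univ).filter (fun s => CubeIn X s.1 s.2)

theorem mem_KK {X : Finset (Fin n → ℤ)} {s : (Fin n → ℤ) × Finset (Fin n)} :
    s ∈ KK X ↔ CubeIn X s.1 s.2 := by
  simp only [KK, Finset.mem_filter, Finset.mem_product, Finset.mem_univ, and_true,
    and_iff_right_iff_imp]
  intro h
  have := h (fun _ => false)
  have e : pt s.1 s.2 (fun _ => false) = s.1 := by funext i; simp [pt]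
  rwa [e] at this

def phi (h : Bool → (Fin n → ℤ) → (Fin n → ℤ)) (a : Fin n → ℤ) (D : Finset (Fin n)) :
    (Option (Fin n) → Bool) → Fin n → ℤ := fun x => h (x none) (pt a D (fun i => x (some i)))

def Fx (f : (Fin n → ℤ) → (Fin n → ℤ)) (a : Fin n → ℤ) (D : Finset (Fin n)) : Prop :=
  ∃ (p : Fin n → Fin n) (c : Fin n → Bool), Bij p D D ∧
    ∀ x, ∀ j, f (pt a D x) j = a j + if j ∈ D ∧ xor (x (p j)) (c j) = true then 1 else 0

def near (u v : Fin n → ℤ) : Prop := (∑ i, |u i - v i|) ≤ 1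

theorem near_of {u v : Fin n → ℤ} (h : u = v ∨ c1Adj u v) : near u v := by
  rcases h with rfl | h
  · simp [near]
  · exact le_of_eq h

theorem near_one {u v : Fin n → ℤ} (h : near u v) (j : Fin n) : |u j - v j| ≤ 1 :=
  (Finset.single_le_sum (f := fun i => |u i - v i|) (fun _ _ => abs_nonneg _)
    (Finset.mem_univ j)).trans h

theorem near_two {u v : Fin n → ℤ} (h : near u v) (i j : Fin n) (hi : u i ≠ v i)
    (hj : u j ≠ v j) : i = j := by
  by_contra hne
  have h1 : ∑ k ∈ ({i, j} : Finset (Fin n)), |u k - v k| ≤ ∑ k, |u k - v k| :=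
    Finset.sum_le_sum_of_subset_of_nonneg (Finset.subset_univ _) (fun _ _ _ => abs_nonneg _)
  rw [Finset.sum_pair hne] at h1
  have h2 : 0 < |u i - v i| := abs_pos.2 (sub_ne_zero.2 hi)
  have h3 : 0 < |u j - v j| := abs_pos.2 (sub_ne_zero.2 hj)
  unfold near at h
  omega

theorem adj_pt (a : Fin n → ℤ) (D : Finset (Fin n)) (x : Fin n → Bool) (k : Fin n) (hk : k ∈ D) :
    c1Adj (pt a D x) (pt a D (flp k x)) := by
  unfold c1Adj
  rw [Finset.sum_eq_single_of_mem k (Finset.mem_univ _)]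
  · simp only [pt, flp_same, hk, true_and]
    cases x k <;> simp
  · intro i _ hi
    simp [pt, flp_ne _ hi]

theorem adjM_phi {X : Finset (Fin n → ℤ)} {h : Bool → (Fin n → ℤ) → (Fin n → ℤ)}
    (hc : ∀ t, c1Cont X (h t)) (hn : ∀ x ∈ X, near (h false x) (h true x))
    {a : Fin n → ℤ} {D : Finset (Fin n)} (hK : CubeIn X a D) : AdjM (phi h a D) := by
  have : ∀ x l, near (phi h a D x) (phi h a D (flp l x)) := by
    intro x l
    cases l with
    | none =>
      have e : (fun i => flp none x (some i)) = fun i => x (some i) := by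
        funext i; rw [flp_ne]; simp
      simp only [phi, flp_same, e]
      have := hn _ (hK (fun i => x (some i)))
      cases x none
      · exact this
      · unfold near at this ⊢
        simpa [abs_sub_comm] using this
    | some k =>
      have e : (fun i => flp (some k) x (some i)) = flp k (fun i => x (some i)) := by
        funext i
        by_cases hi : i = k
        · subst hi; simp [flp_same]
        · rw [flp_ne _ hi, flp_ne]; simpa using hi
      have e0 : flp (some k) x none = x none := by rw [flp_ne]; simp
      simp only [phi, e, e0]
      by_cases hk : k ∈ D
      · exact near_of (hc _ _ (hK _) _ (hK _) (adj_pt a D _ k hk))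
      · have : pt a D (flp k fun i => x (some i)) = pt a D (fun i => x (some i)) := by
          funext i
          by_cases hi : i = k
          · subst hi; simp [pt, hk]
          · simp [pt, flp_ne _ hi]
        rw [this]
        exact near_of (Or.inl rfl)
  intro x l
  exact ⟨near_one (this x l), near_two (this x l)⟩

theorem eiso_change {ι κ : Type} [DecidableEq ι] [DecidableEq κ] {D : Finset ι} {x0 x0' : ι → Bool}
    {φ φ' : (ι → Bool) → κ → ℤ} {a : κ → ℤ} {E : Finset κ}
    (h : ∀ x, InC D x0 x → ∃ y, InC D x0' y ∧ (∀ i ∈ D, x i = y i) ∧ φ x = φ' y)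
    (he : EIso D x0' φ' a E) : EIso D x0 φ a E := by
  obtain ⟨p, c, hp, hc⟩ := he
  refine ⟨p, c, hp, fun x hx j => ?_⟩
  obtain ⟨y, hy, h1, h2⟩ := h x hx
  rw [h2, hc y hy j]
  by_cases hj : j ∈ E
  · rw [h1 _ (hp.1 j hj)]
  · simp [hj]

def up (a : Fin n → ℤ) (k : Fin n) (δ : Bool) : Fin n → ℤ :=
  fun i => a i + if i = k ∧ δ = true then 1 else 0

theorem sh_up (a : Fin n → ℤ) (k : Fin n) (δ : Bool) : sh (up a k δ) k δ = a := by
  funext i; simp [sh, up]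
theorem up_sh (a : Fin n → ℤ) (k : Fin n) (δ : Bool) : up (sh a k δ) k δ = a := by
  funext i; simp [sh, up]

theorem pt_up (a : Fin n → ℤ) (D : Finset (Fin n)) (k : Fin n) (hk : k ∈ D) (δ : Bool)
    (x : Fin n → Bool) : pt (up a k δ) (D.erase k) x = pt a D (Function.update x k δ) := by
  funext i
  by_cases hi : i = k
  · subst hi; simp [pt, up, hk]
  · simp [pt, up, hi]

theorem ins_erase (D : Finset (Fin n)) (k : Fin n) :
    (Finset.insertNone D).erase (some k) = Finset.insertNone (D.erase k) := by
  ext i; cases i <;> simp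

theorem facet_iff (h : Bool → (Fin n → ℤ) → (Fin n → ℤ)) (a : Fin n → ℤ) (D : Finset (Fin n))
    (k : Fin n) (hk : k ∈ D) (δ : Bool) :
    EIso ((Finset.insertNone D).erase (some k))
      (Function.update (fun _ => false) (some k) δ) (phi h a D) a D ↔
    EIso (Finset.insertNone (D.erase k)) (fun _ => false)
      (phi h (up a k δ) (D.erase k)) a D := by
  have hk' : some k ∈ Finset.insertNone D := by simpa using hk
  rw [← ins_erase]
  have key : ∀ x : Option (Fin n) → Bool, ∀ b, phi h (up a k δ) (D.erase k) (Function.update x (some k) b)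
      = phi h a D (Function.update x (some k) δ) := by
    intro x b
    simp only [phi, pt_up a D k hk]
    have e1 : Function.update x (some k) b none = Function.update x (some k) δ none := by simp
    have e2 : Function.update (fun i => Function.update x (some k) b (some i)) k δ
        = fun i => Function.update x (some k) δ (some i) := by
      funext i
      by_cases hi : i = k
      · subst hi; simp
      · simp [hi]
    rw [e1, e2]
  constructor
  · apply eiso_change
    intro x hx
    refine ⟨Function.update x (some k) δ, ?_, ?_, ?_⟩
    · rw [inC_face hk']
      refine ⟨fun i hi => ?_, by simp⟩
      rw [Function.update_of_ne (by rintro rfl; exact hi hk')]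
      exact hx i (by simp [hi])
    · intro i hi
      rw [Function.update_of_ne (by rintro rfl; simp at hi)]
    · rw [← key x (x (some k)), Function.update_eq_self]
  · apply eiso_change
    intro x hx
    rw [inC_face hk'] at hx
    refine ⟨Function.update x (some k) false, ?_, ?_, ?_⟩
    · intro i hi
      by_cases e : i = some k
      · subst e; simp
      · rw [Function.update_of_ne e]; exact hx.1 i (by simpa [e] using hi)
    · intro i hi
      rw [Function.update_of_ne (by rintro rfl; simp at hi)]
    · rw [key, ← hx.2, Function.update_eq_self]

theorem fx_iff (h : Bool → (Fin n → ℤ) → (Fin n → ℤ)) (a : Fin n → ℤ) (D : Finset (Fin n))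
    (t : Bool) :
    EIso ((Finset.insertNone D).erase none)
      (Function.update (fun _ => false) none t) (phi h a D) a D ↔ Fx (h t) a D := by
  have hk' : none ∈ Finset.insertNone D := by simp
  constructor
  · rintro ⟨p, c, hp, hc⟩
    have hps : ∀ j ∈ D, p j = some ((p j).getD j) := by
      intro j hj
      have := hp.1 j hj
      cases e : p j with
      | none => simp [e] at this
      | some k => simp
    refine ⟨fun j => (p j).getD j, c, ⟨?_, ?_, ?_⟩, ?_⟩
    · intro j hj
      have := hp.1 j hj
      rw [hps j hj] at this
      simpa using this
    · intro i hi j hj e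
      apply hp.2.1 i hi j hj
      rw [hps i hi, hps j hj]; exact congrArg some e
    · intro d hd
      obtain ⟨j, hj, e⟩ := hp.2.2 (some d) (by simpa using hd)
      exact ⟨j, hj, by simp [e]⟩
    · intro x j
      let y : Option (Fin n) → Bool := fun o => o.elim t (fun i => if i ∈ D then x i else false)
      have hy : InC ((Finset.insertNone D).erase none) (Function.update (fun _ => false) none t) y := by
        rw [inC_face hk']
        refine ⟨?_, rfl⟩
        intro i hi
        cases i with
        | none => simp at hi
        | some i => simp at hi; simp [y, hi]
      have h1 := hc y hy j
      have h2 : phi h a D y = h t (pt a D x) := by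
        simp only [phi, y, Option.elim]
        congr 1
        funext i
        by_cases hi : i ∈ D <;> simp [pt, hi]
      rw [h2] at h1
      rw [h1]
      by_cases hj : j ∈ D
      · have h3 : y (p j) = x ((p j).getD j) := by
          have h4 := hp.1 j hj
          rw [hps j hj] at h4 ⊢
          simp at h4
          simp [y, h4]
        rw [h3]
      · simp [hj]
  · rintro ⟨p, c, hp, hc⟩
    refine ⟨fun j => some (p j), c, ⟨?_, ?_, ?_⟩, ?_⟩
    · intro j hj; simpa using hp.1 j hj
    · intro i hi j hj e
      exact hp.2.1 i hi j hj (by simpa using e)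
    · intro d hd
      cases d with
      | none => simp at hd
      | some d =>
        obtain ⟨j, hj, e⟩ := hp.2.2 d (by simpa using hd)
        exact ⟨j, hj, by simp [e]⟩
    · intro x hx j
      rw [inC_face hk'] at hx
      simp only [phi, hx.2]
      rw [hc]

theorem cube_of_eiso {X : Finset (Fin n → ℤ)} {ι : Type} [DecidableEq ι] {D : Finset ι}
    {φ : (ι → Bool) → Fin n → ℤ} (hφ : ∀ x, φ x ∈ X) {a : Fin n → ℤ} {E : Finset (Fin n)}
    (h : EIso D (fun _ => false) φ a E) : CubeIn X a E := by
  classical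
  obtain ⟨p, c, hp, hc⟩ := h
  intro y
  let x : ι → Bool := fun d => decide (∃ i ∈ E, p i = d ∧ xor (y i) (c i) = true)
  have hx : InC D (fun _ => false) x := by
    intro d hd
    simp only [x, decide_eq_false_iff_not]
    rintro ⟨i, hi, rfl, _⟩
    exact hd (hp.1 i hi)
  have hxp : ∀ j ∈ E, x (p j) = xor (y j) (c j) := by
    intro j hj
    rw [Bool.eq_iff_iff]
    simp only [x, decide_eq_true_eq]
    constructor
    · rintro ⟨i, hi, e, h⟩
      rwa [← hp.2.1 i hi j hj e]
    · intro h; exact ⟨j, hj, rfl, h⟩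
  have : pt a E y = φ x := by
    funext j
    rw [hc x hx j]
    by_cases hj : j ∈ E
    · rw [hxp j hj]; simp [pt, hj]
    · simp [pt, hj]
  rw [this]; exact hφ x

theorem parity_step {X : Finset (Fin n → ℤ)} {h : Bool → (Fin n → ℤ) → (Fin n → ℤ)}
    (hm : ∀ t, MapsInto X X (h t))
    (hc : ∀ t, c1Cont X (h t)) (hn : ∀ x ∈ X, near (h false x) (h true x)) :
    ∑ s ∈ KK X, ind (Fx (h false) s.1 s.2) = ∑ s ∈ KK X, ind (Fx (h true) s.1 s.2) := by
  have h1 : ∀ s ∈ KK X,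
      (ind (Fx (h false) s.1 s.2) + ind (Fx (h true) s.1 s.2)) +
        ∑ q : Fin n × Bool, ind (q.1 ∈ s.2 ∧ EIso (Finset.insertNone (s.2.erase q.1)) (fun _ => false)
          (phi h (up s.1 q.1 q.2) (s.2.erase q.1)) s.1 s.2)
      = ∑ q : Fin n × Bool, ind (q.1 ∉ s.2 ∧ EIso (Finset.insertNone s.2) (fun _ => false)
          (phi h s.1 s.2) (sh s.1 q.1 q.2) (insert q.1 s.2)) := by
    rintro ⟨a, D⟩ hs
    rw [mem_KK] at hs
    simp only at hs ⊢
    have := lem_LE (adjM_phi hc hn hs) (Finset.insertNone D) D (fun _ => false) a (by simp)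
    rw [Finset.sum_insertNone, Fintype.sum_bool, ind_congr (fx_iff h a D true),
      ind_congr (fx_iff h a D false), add_comm (ind (Fx (h true) a D))] at this
    rw [Fintype.sum_prod_type, Fintype.sum_prod_type, ← this]
    congr 1
    rw [← Finset.sum_subset (Finset.subset_univ D)]
    · refine Finset.sum_congr rfl fun k hk => Finset.sum_congr rfl fun δ _ => ?_
      rw [ind_congr (facet_iff h a D k hk δ)]
      exact ind_congr (by simp [hk])
    · intro k _ hk
      exact Finset.sum_eq_zero fun δ _ => ind_f fun h => hk h.1
  have h2 := Finset.sum_congr (rfl : KK X = KK X) h1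
  rw [Finset.sum_add_distrib, Finset.sum_add_distrib] at h2
  apply z2_eq
  have h3 : ∑ s ∈ KK X, ∑ q : Fin n × Bool, ind (q.1 ∈ s.2 ∧
        EIso (Finset.insertNone (s.2.erase q.1)) (fun _ => false)
          (phi h (up s.1 q.1 q.2) (s.2.erase q.1)) s.1 s.2)
      = ∑ s ∈ KK X, ∑ q : Fin n × Bool, ind (q.1 ∉ s.2 ∧ EIso (Finset.insertNone s.2) (fun _ => false)
          (phi h s.1 s.2) (sh s.1 q.1 q.2) (insert q.1 s.2)) := by
    rw [← Finset.sum_product', ← Finset.sum_product']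
    refine Finset.sum_bij_ne_zero
      (fun w _ _ => ((up w.1.1 w.2.1 w.2.2, w.1.2.erase w.2.1), w.2)) ?_ ?_ ?_ ?_
    · rintro ⟨⟨a, D⟩, k, δ⟩ hw hne
      have hw' := ind_of_ne hne
      simp only [Finset.mem_product, mem_KK, Finset.mem_univ, and_true] at hw hw' ⊢
      intro x
      rw [pt_up a D k hw'.1]
      exact hw _
    · rintro ⟨⟨a, D⟩, k, δ⟩ hw hne ⟨⟨a', D'⟩, k', δ'⟩ hw2 hne2 e
      have hw' := (ind_of_ne hne).1
      have hw2' := (ind_of_ne hne2).1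
      simp only [Prod.mk.injEq] at e hw' hw2' ⊢
      obtain ⟨⟨e1, e2⟩, rfl, rfl⟩ := e
      refine ⟨⟨?_, ?_⟩, rfl, rfl⟩
      · rw [← sh_up a k δ, e1, sh_up]
      · rw [← Finset.insert_erase hw', e2, Finset.insert_erase hw2']
    · rintro ⟨⟨b, R⟩, j, η⟩ hw hne
      have hw' := ind_of_ne hne
      simp only [Finset.mem_product, mem_KK, Finset.mem_univ, and_true] at hw hw'
      obtain ⟨hj, hE⟩ := hw'
      refine ⟨((sh b j η, insert j R), j, η), ?_, ?_, ?_⟩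
      · simp only [Finset.mem_product, mem_KK, Finset.mem_univ, and_true]
        exact cube_of_eiso (fun x => hm _ _ (hw _)) hE
      · rw [ind_t]
        · simp
        · simp only [up_sh, Finset.erase_insert hj]
          exact ⟨by simp, hE⟩
      · simp only [up_sh, Finset.erase_insert hj]
    · rintro ⟨⟨a, D⟩, k, δ⟩ hw hne
      have hw' := ind_of_ne hne
      rw [ind_t hw']
      simp only at hw' ⊢
      rw [ind_t]
      rw [sh_up, Finset.insert_erase hw'.1]
      exact ⟨by simp, hw'.2⟩
  rw [h3] at h2
  simpa using h2

theorem fx_const {X : Finset (Fin n → ℤ)} {g : (Fin n → ℤ) → (Fin n → ℤ)} {b : Fin n → ℤ}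
    (hb : b ∈ X) (hg : ∀ x ∈ X, g x = b) : ∑ s ∈ KK X, ind (Fx g s.1 s.2) = 1 := by
  have hbK : (b, (∅ : Finset (Fin n))) ∈ KK X := by
    rw [mem_KK]; intro x
    have e : pt b ∅ x = b := by funext i; simp [pt]
    simpa [e] using hb
  rw [Finset.sum_eq_single_of_mem _ hbK]
  · apply ind_t
    refine ⟨id, fun _ => false, ⟨by simp, by simp, by simp⟩, ?_⟩
    intro x j
    have : pt b ∅ x = b := by funext i; simp [pt]
    simp [this, hg b hb]
  · rintro ⟨a, D⟩ hs hne
    apply ind_f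
    rintro ⟨p, c, hp, hc⟩
    rw [mem_KK] at hs
    apply hne
    have hD : D = ∅ := by
      by_contra hD
      obtain ⟨j, hj⟩ := Finset.nonempty_iff_ne_empty.2 hD
      have h1 := hc (fun _ => true) j
      have h2 := hc (fun _ => false) j
      rw [hg _ (hs _)] at h1 h2
      rw [h1] at h2
      simp only at hj h2
      cases e : c j <;> simp [hj, e] at h2
    subst hD
    congr 1
    funext j
    have h1 := hc (fun _ => true) j
    rw [hg _ (hs _)] at h1
    simpa using h1.symm

theorem approx_of {X : Finset (Fin n → ℤ)} {f : (Fin n → ℤ) → (Fin n → ℤ)} {a : Fin n → ℤ}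
    {D : Finset (Fin n)} (hK : CubeIn X a D) (x y : Fin n → Bool)
    (h : f (pt a D x) = pt a D y) : nApproxFix X f n (pt a D x) := by
  refine ⟨n, fun t => pt a D (fun i => if i.val < t then y i else x i), le_rfl, ?_, ?_, ?_, ?_⟩
  · simp
  · rw [h]; simp
  · intro t _; exact hK _
  · intro t ht
    set z : Fin n → Bool := fun i => if i.val < t then y i else x i with hz
    have hlt : t < n := ht
    have hz' : (fun i : Fin n => if i.val < t + 1 then y i else x i)
        = Function.update z ⟨t, hlt⟩ (y ⟨t, hlt⟩) := by
      funext i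
      by_cases e : i = ⟨t, hlt⟩
      · subst e; simp
      · have : i.val ≠ t := fun h => e (Fin.ext h)
        rw [Function.update_of_ne e, hz]
        have : (i.val < t + 1) ↔ i.val < t := by omega
        simp [this]
    beta_reduce
    rw [hz', ← hz]
    by_cases e : y ⟨t, hlt⟩ = z ⟨t, hlt⟩
    · left; rw [e, Function.update_eq_self]
    · have : Function.update z ⟨t, hlt⟩ (y ⟨t, hlt⟩) = flp ⟨t, hlt⟩ z := by
        unfold flp
        congr 1
        revert e; cases y ⟨t, hlt⟩ <;> cases z ⟨t, hlt⟩ <;> simp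
      rw [this]
      by_cases hD : (⟨t, hlt⟩ : Fin n) ∈ D
      · right; exact adj_pt a D z _ hD
      · left
        funext i
        by_cases hi : i = ⟨t, hlt⟩
        · subst hi; simp [pt, hD]
        · simp [pt, flp_ne _ hi]

theorem cont_weak {X : Finset (Fin n → ℤ)} {f : (Fin n → ℤ) → (Fin n → ℤ)} (hf : c1Cont X f)
    {u v : Fin n → ℤ} (hu : u ∈ X) (hv : v ∈ X) (h : u = v ∨ c1Adj u v) :
    f u = f v ∨ c1Adj (f u) (f v) := by
  rcases h with rfl | h
  · exact Or.inl rfl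
  · exact hf u hu v hv h

theorem exists_fx {X : Finset (Fin n → ℤ)} (hX : c1Contractible X)
    {f : (Fin n → ℤ) → (Fin n → ℤ)} (hm : MapsInto X X f) (hf : c1Cont X f) :
    ∃ a D, CubeIn X a D ∧ Fx f a D := by
  obtain ⟨b, hb, k, H, H1, H2, H3, H4, H5⟩ := hX
  have main : ∀ t ≤ k, ∑ s ∈ KK X, ind (Fx (fun x => f (H x 0)) s.1 s.2)
      = ∑ s ∈ KK X, ind (Fx (fun x => f (H x t)) s.1 s.2) := by
    intro t
    induction t with
    | zero => intro _; rfl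
    | succ t ih =>
      intro ht
      rw [ih (by omega)]
      have hle : ∀ r : Bool, t + r.toNat ≤ k := by
        intro r; cases r <;> simp <;> omega
      have := parity_step (X := X) (h := fun r x => f (H x (t + r.toNat)))
        (fun r x hx => hm _ (H1 x hx _ (hle r)))
        (fun r x hx y hy hxy => cont_weak hf (H1 x hx _ (hle r)) (H1 y hy _ (hle r))
          (H5 _ (hle r) x hx y hy hxy))
        (fun x hx => near_of (cont_weak hf (H1 x hx _ (hle false)) (H1 x hx _ (hle true))
          (H4 x hx t ht)))
      simpa using this
  have h1 := main k le_rfl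
  rw [fx_const (g := fun x => f (H x k)) (hm b hb) (fun x hx => by rw [H3 x hx])] at h1
  obtain ⟨s, hs, hne⟩ := Finset.exists_ne_zero_of_sum_ne_zero (h1.trans_ne one_ne_zero)
  have hK := mem_KK.1 hs
  obtain ⟨p, c, hp, hc⟩ := ind_of_ne hne
  refine ⟨s.1, s.2, hK, p, c, hp, fun x j => ?_⟩
  rw [← hc x j]
  beta_reduce
  rw [H2 _ (hK x)]
  rfl

end glob

/-- Let `X ⊆ ℤ^n` (`n ≤ 3`) be a finite contractible digital image with `c1`-adjacency.
Then every `c1`-continuous self-map `f : X → X` has a fixed point or at least two distinct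
`n`-approximate fixed points. -/
theorem fixed_or_napprox_of_contractible {n : ℕ} (hn : n ≤ 3) (X : Finset (Fin n → ℤ))
    (hX : c1Contractible X) :
    ∀ f : (Fin n → ℤ) → (Fin n → ℤ), MapsInto X X f → c1Cont X f →
      (∃ x ∈ X, f x = x) ∨
        ∃ x ∈ X, ∃ y ∈ X, x ≠ y ∧ nApproxFix X f n x ∧ nApproxFix X f n y := by
  intro f hm hf
  obtain ⟨a, D, hK, p, c, hp, hc⟩ := exists_fx hX hm hf
  have hpt : ∀ x, f (pt a D x) = pt a D (fun j => xor (x (p j)) (c j)) := by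
    intro x; funext j; rw [hc x j]; rfl
  by_cases hD : D = ∅
  · left
    subst hD
    refine ⟨pt a ∅ (fun _ => false), hK _, ?_⟩
    rw [hpt]
    funext i
    simp [pt]
  · right
    obtain ⟨j, hj⟩ := Finset.nonempty_iff_ne_empty.2 hD
    refine ⟨pt a D (fun _ => false), hK _, pt a D (fun _ => true), hK _, ?_,
      approx_of hK _ _ (hpt _), approx_of hK _ _ (hpt _)⟩
    intro e
    have := congrFun e j
    simp [pt, hj] at this
end

section
/- Let n ≥ 1, let X = {0,1}^n ⊆ ℤ^n with c1-adjacency, and let f : X → X be the antipodal map f(t_1,…,t_n) = (1−t_1,…,1−t_n). Then every point of X is an n-approximate fixed point of f, and no point of X is a k-approximate fixed point of f for any k < n; equivalently, every c1-path in X from a point x to f(x) has length at least n, and such a path of length exactly n exists. -/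
theorem mem_unitCube {n : ℕ} (x : Fin n → ℤ) :
    x ∈ eCube (fun _ => (0 : ℤ)) (Finset.univ : Finset (Fin n)) ↔ ∀ i, x i = 0 ∨ x i = 1 := by
  unfold eCube
  rw [Finset.mem_image]
  constructor
  · rintro ⟨s, -, rfl⟩ i
    by_cases h : i ∈ s <;> simp [h]
  · intro h
    refine ⟨Finset.univ.filter (fun i => x i = 1), by simp, ?_⟩
    funext i
    rcases h i with h | h <;> simp [h]

theorem path_dist_le {n : ℕ} (p : ℕ → (Fin n → ℤ)) (m : ℕ)
    (h : ∀ t, t + 1 ≤ m → (p t = p (t + 1) ∨ c1Adj (p t) (p (t + 1)))) :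
    ∑ i, |p 0 i - p m i| ≤ (m : ℤ) := by
  induction m with
  | zero => simp
  | succ m ih =>
    have h1 := ih (fun t ht => h t (by omega))
    have h2 : ∑ i, |p m i - p (m + 1) i| ≤ 1 := by
      rcases h m le_rfl with h | h
      · rw [← h]; simp
      · exact le_of_eq h
    have h3 : ∑ i, |p 0 i - p (m + 1) i| ≤
        ∑ i, |p 0 i - p m i| + ∑ i, |p m i - p (m + 1) i| := by
      rw [← Finset.sum_add_distrib]
      exact Finset.sum_le_sum fun i _ => abs_sub_le _ _ _
    push_cast
    linarith

/-- Let `n ≥ 1`, let `X = {0,1}^n ⊆ ℤ^n` with `c1`-adjacency, and let `f` be the antipodal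
map `f(t_1,…,t_n) = (1−t_1,…,1−t_n)`. Then every point of `X` is an `n`-approximate fixed
point of `f`, and no point of `X` is a `k`-approximate fixed point of `f` for any `k < n`
(equivalently: every `c1`-path in `X` from `x` to `f x` has length at least `n`, and such
a path of length exactly `n` exists). -/
theorem antipodal_napprox {n : ℕ} (hn : 1 ≤ n) :
    (∀ x ∈ eCube (fun _ => (0 : ℤ)) (Finset.univ : Finset (Fin n)),
      nApproxFix (eCube (fun _ => (0 : ℤ)) Finset.univ)
        (fun x i => 1 - x i) n x) ∧
    (∀ k < n, ∀ x ∈ eCube (fun _ => (0 : ℤ)) (Finset.univ : Finset (Fin n)),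
      ¬ nApproxFix (eCube (fun _ => (0 : ℤ)) Finset.univ)
        (fun x i => 1 - x i) k x) := by
  constructor
  · intro x hx
    rw [mem_unitCube] at hx
    refine ⟨n, fun t i => if i.val < t then 1 - x i else x i, le_rfl, ?_, ?_, ?_, ?_⟩
    · funext i; simp
    · funext i; simp
    · intro t _
      rw [mem_unitCube]
      intro i
      have := hx i
      dsimp only
      split_ifs <;> omega
    · intro t ht
      right
      unfold c1Adj
      rw [Finset.sum_eq_single (⟨t, ht⟩ : Fin n)]
      · rcases hx ⟨t, ht⟩ with h | h <;> simp [h]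
      · intro i _ hi
        have hne : i.val ≠ t := fun h => hi (Fin.ext h)
        by_cases h : i.val < t
        · have h' : i.val < t + 1 := by omega
          simp [h, h']
        · have h' : ¬ i.val < t + 1 := by omega
          simp [h, h']
      · simp
  · rintro k hk x hx ⟨m, p, hm, h0, h1, -, hp⟩
    rw [mem_unitCube] at hx
    have h := path_dist_le p m hp
    rw [h0, h1] at h
    have h2 : ∑ i, |x i - (1 - x i)| = (n : ℤ) := by
      have : ∀ i ∈ (Finset.univ : Finset (Fin n)), |x i - (1 - x i)| = (1 : ℤ) := by
        intro i _
        rcases hx i with h | h <;> simp [h]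
      rw [Finset.sum_congr rfl this]
      simp
    dsimp only at h
    rw [h2] at h
    omega
end

section
/- Let n ≥ 3 and let C_n be the digital cycle on n points. Then for every continuous self-map f : C_n → C_n, the simplicial Lefschetz number satisfies L(f) ∈ {0, 1, 2}. -/
/-- A function `f : (X,κ) → (Y,λ)` between digital images is (digitally) continuous if
whenever `x, y` are `κ`-adjacent, `f x = f y` or `f x, f y` are `λ`-adjacent. -/
def DigCont {X Y : Type*} (κ : X → X → Prop) (lam : Y → Y → Prop) (f : X → Y) : Prop :=
  ∀ x y, κ x y → f x = f y ∨ lam (f x) (f y)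

/-- A clique of `(X,κ)`: a nonempty set of mutually `κ`-adjacent points. -/
def IsClique {X : Type*} (κ : X → X → Prop) (S : Finset X) : Prop :=
  S.Nonempty ∧ ∀ x ∈ S, ∀ y ∈ S, x ≠ y → κ x y

/-- `x` is an approximate fixed point of `f`: `f x = x` or `f x` is adjacent to `x`. -/
def ApproxFix {X : Type*} (κ : X → X → Prop) (f : X → X) (x : X) : Prop :=
  f x = x ∨ κ x (f x)

/-- A strong homotopy between `f, g : (X,κ) → (Y,λ)` is `H : X × {0,…,m} → Y` with
`H(x,0) = f(x)`, `H(x,m) = g(x)`, such that whenever (`x = x′` or `x,x′` are `κ`-adjacent)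
and `|t − t′| ≤ 1`, with `(x,t) ≠ (x′,t′)`, the values `H(x,t), H(x′,t′)` are equal or
`λ`-adjacent.  `f ≃* g` iff such an `H` exists. -/
def StrongHomotopic {X Y : Type*} (κ : X → X → Prop) (lam : Y → Y → Prop)
    (f g : X → Y) : Prop :=
  ∃ (m : ℕ) (H : X → ℕ → Y),
    (∀ x, H x 0 = f x) ∧ (∀ x, H x m = g x) ∧
    ∀ x x' (t t' : ℕ), t ≤ m → t' ≤ m → (x = x' ∨ κ x x') →
      (t = t' ∨ t + 1 = t' ∨ t' + 1 = t) → (x ≠ x' ∨ t ≠ t') →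
      (H x t = H x' t' ∨ lam (H x t) (H x' t'))

/-- The permutation induced by `f` on a finite set `S` with `f(S) = S`. -/
noncomputable def fixedSetPerm {X : Type*} [DecidableEq X] (f : X → X) (S : Finset X)
    (h : S.image f = S) : Equiv.Perm {x // x ∈ S} :=
  Equiv.ofBijective
    (fun x => ⟨f x.1, by
      have hx : f x.1 ∈ S.image f := Finset.mem_image_of_mem f x.2
      rwa [h] at hx⟩)
    (by
      rw [Fintype.bijective_iff_surjective_and_card]
      refine ⟨fun y => ?_, rfl⟩
      have hy : (y : X) ∈ S.image f := by rw [h]; exact y.2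
      obtain ⟨x, hx, hfx⟩ := Finset.mem_image.mp hy
      exact ⟨⟨x, hx⟩, Subtype.ext hfx⟩)

open Classical in
/-- The simplicial Lefschetz number `L(f) = ∑_S (−1)^{|S|−1} sgn(f|_S)`, summing over all
cliques `S` of `(X,κ)` with `f(S) = S`. -/
noncomputable def simpLef {X : Type*} [Fintype X] [DecidableEq X]
    (κ : X → X → Prop) (f : X → X) : ℤ :=
  ∑ S : Finset X,
    if h : IsClique κ S ∧ S.image f = S then
      (-1 : ℤ) ^ (S.card - 1) * ((Equiv.Perm.sign (fixedSetPerm f S h.2) : ℤˣ) : ℤ)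
    else 0

open Classical in
/-- The simplicial Euler characteristic `χ(X) = ∑_{q≥0} (−1)^q s_q`, where `s_q` is the
number of cliques of `X` with exactly `q+1` points; equivalently `∑_S (−1)^{|S|−1}` over
all cliques `S`. -/
noncomputable def simpEuler {X : Type*} [Fintype X] (κ : X → X → Prop) : ℤ :=
  ∑ S : Finset X, if IsClique κ S then (-1 : ℤ) ^ (S.card - 1) else 0

/-- The adjacency relation of the digital cycle `C_n` on `ℤ/nℤ`: `i` and `j` are adjacent
iff `i − j ≡ ±1 (mod n)`. -/
def cycleAdj (n : ℕ) (i j : ZMod n) : Prop := i - j = 1 ∨ j - i = 1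


theorem aux_mul_eq_one {n : ℕ} (hn : 3 ≤ n) [NeZero n] (k : ℕ) (hk0 : 0 < k) (hk : k < n) :
    ((k : ℕ) : ZMod n) ≠ 0 := by
  intro h
  rw [ZMod.natCast_eq_zero_iff] at h
  exact absurd (Nat.le_of_dvd hk0 h) (by omega)

theorem aux_one {n : ℕ} (hn : 3 ≤ n) [NeZero n] : (1 : ZMod n) ≠ 0 := by
  have := aux_mul_eq_one hn 1 (by omega) (by omega)
  simpa using this

theorem aux_two {n : ℕ} (hn : 3 ≤ n) [NeZero n] : (2 : ZMod n) ≠ 0 := by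
  have := aux_mul_eq_one hn 2 (by omega) (by omega)
  simpa using this

theorem aux_clique {n : ℕ} (hn : 3 ≤ n) [NeZero n] (S : Finset (ZMod n))
    (hS : IsClique (cycleAdj n) S) :
    (∃ i, S = {i}) ∨ (∃ i, S = {i, i + 1}) ∨ (n = 3 ∧ S = Finset.univ) := by
  obtain ⟨⟨x, hx⟩, h⟩ := hS
  have hsub : ∀ y ∈ S, y = x ∨ y = x + 1 ∨ y = x - 1 := by
    intro y hy
    by_cases hxy : y = x
    · exact Or.inl hxy
    · rcases h y hy x hx hxy with h1 | h1
      · right; left; rw [← h1]; ring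
      · right; right; rw [← h1]; ring
  have h1 := aux_one hn
  have h2 := aux_two hn
  by_cases ha : x + 1 ∈ S
  · by_cases hb : x - 1 ∈ S
    · right; right
      have hne : x + 1 ≠ x - 1 := by
        intro h'
        apply h2
        linear_combination h'
      have h3 : (3 : ZMod n) = 0 := by
        rcases h _ ha _ hb hne with h' | h'
        · exact absurd (by linear_combination h') h1
        · linear_combination -h'
      have h3' : ((3 : ℕ) : ZMod n) = 0 := by simpa using h3
      rw [ZMod.natCast_eq_zero_iff] at h3'
      have hn3 : n = 3 := le_antisymm (Nat.le_of_dvd (by norm_num) h3') hn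
      refine ⟨hn3, ?_⟩
      apply Finset.eq_univ_of_card
      apply le_antisymm (Finset.card_le_univ _)
      rw [ZMod.card]
      refine le_trans hn3.le ?_
      have hc : ({x, x + 1, x - 1} : Finset (ZMod n)).card = 3 := by
        rw [Finset.card_eq_three]
        exact ⟨x, x + 1, x - 1, by simpa using h1, fun h' => h1 (by linear_combination h'), hne, rfl⟩
      rw [← hc]
      apply Finset.card_le_card
      intro y hy
      simp only [Finset.mem_insert, Finset.mem_singleton] at hy
      rcases hy with rfl | rfl | rfl <;> assumption
    · right; left
      refine ⟨x, ?_⟩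
      ext y
      simp only [Finset.mem_insert, Finset.mem_singleton]
      constructor
      · intro hy
        rcases hsub y hy with h' | h' | h'
        · exact Or.inl h'
        · exact Or.inr h'
        · exact absurd (h' ▸ hy) hb
      · rintro (rfl | rfl) <;> assumption
  · by_cases hb : x - 1 ∈ S
    · right; left
      refine ⟨x - 1, ?_⟩
      ext y
      simp only [Finset.mem_insert, Finset.mem_singleton, sub_add_cancel]
      constructor
      · intro hy
        rcases hsub y hy with h' | h' | h'
        · exact Or.inr h'
        · exact absurd (h' ▸ hy) ha
        · exact Or.inl h'
      · rintro (rfl | rfl) <;> assumption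
    · left
      refine ⟨x, ?_⟩
      ext y
      simp only [Finset.mem_singleton]
      constructor
      · intro hy
        rcases hsub y hy with h' | h' | h'
        · exact h'
        · exact absurd (h' ▸ hy) ha
        · exact absurd (h' ▸ hy) hb
      · rintro rfl; assumption

/-- local contribution -/
def locA {n : ℕ} (f : ZMod n → ZMod n) (i : ZMod n) : ℤ :=
  (if f i = i then 1 else 0) + ((if f i = i + 1 ∧ f (i + 1) = i then 1 else 0)
    - (if f i = i ∧ f (i + 1) = i + 1 then 1 else 0))

theorem aux_step {n : ℕ} (hn : 3 ≤ n) [NeZero n] (f : ZMod n → ZMod n)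
    (hf : DigCont (cycleAdj n) (cycleAdj n) f) (i : ZMod n) :
    ∃ s : ℤ, 0 ≤ s ∧ s ≤ 2 ∧
      (n : ℤ) * locA f i = ((f (i + 1) - (i + 1)).val : ℤ) - ((f i - i).val : ℤ) + s := by
  have hs : ∃ s : ℤ, 0 ≤ s ∧ s ≤ 2 ∧ f (i + 1) - (i + 1) = f i - i - (s : ZMod n) := by
    rcases hf i (i + 1) (Or.inr (by ring)) with h | h | h
    · exact ⟨1, by norm_num, by norm_num, by push_cast; rw [h]; ring⟩
    · exact ⟨2, by norm_num, by norm_num, by push_cast; linear_combination -h⟩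
    · exact ⟨0, by norm_num, by norm_num, by push_cast; linear_combination h⟩
  obtain ⟨s, hs0, hs2, hs⟩ := hs
  refine ⟨s, hs0, hs2, ?_⟩
  have e1 : f i = i ↔ (f i - i).val = 0 := by rw [ZMod.val_eq_zero, sub_eq_zero]
  have e2 : f (i + 1) = i + 1 ↔ (f (i + 1) - (i + 1)).val = 0 := by
    rw [ZMod.val_eq_zero, sub_eq_zero]
  have e3 : f i = i + 1 ↔ (f i - i).val = 1 := by
    have : Fact (1 < n) := ⟨by omega⟩
    rw [← ZMod.val_one n, (ZMod.val_injective n).eq_iff, sub_eq_iff_eq_add, add_comm]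
  have e4 : f (i + 1) = i ↔ (f (i + 1) - (i + 1)).val = n - 1 := by
    have hv : ((n - 1 : ℕ) : ZMod n).val = n - 1 := ZMod.val_cast_of_lt (by omega)
    conv_rhs => rw [← hv]
    rw [(ZMod.val_injective n).eq_iff, Nat.cast_sub (by omega), ZMod.natCast_self]
    constructor
    · intro h; rw [h]; push_cast; ring
    · intro h; push_cast at h; linear_combination h
  unfold locA
  simp only [e1, e2, e3, e4]
  have hu := ZMod.val_lt (f i - i)
  have hv := ZMod.val_lt (f (i + 1) - (i + 1))
  have hd : (n : ℤ) ∣ ((f (i + 1) - (i + 1)).val : ℤ) - ((f i - i).val : ℤ) + s := by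
    rw [← ZMod.intCast_zmod_eq_zero_iff_dvd]
    push_cast
    rw [ZMod.natCast_zmod_val, ZMod.natCast_zmod_val, hs]
    ring
  generalize (f (i + 1) - (i + 1)).val = v at *
  generalize (f i - i).val = u at *
  clear e1 e2 e3 e4 hs hf
  obtain ⟨k, hk⟩ := hd
  rw [hk]
  congr 1
  have hk0 : -1 < k := by
    by_contra hc
    nlinarith
  have hk1 : k < 2 := by
    by_contra hc
    nlinarith
  have : k = 0 ∨ k = 1 := by omega
  rcases this with rfl | rfl <;> split_ifs <;> omega

theorem aux_sum {n : ℕ} (hn : 3 ≤ n) [NeZero n] (f : ZMod n → ZMod n)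
    (hf : DigCont (cycleAdj n) (cycleAdj n) f) :
    0 ≤ ∑ i, locA f i ∧ ∑ i, locA f i ≤ 2 := by
  choose s h0 h2 h using aux_step hn f hf
  have hsum : (n : ℤ) * ∑ i, locA f i = ∑ i, s i := by
    rw [Finset.mul_sum, Finset.sum_congr rfl (fun i _ => h i), Finset.sum_add_distrib,
      Finset.sum_sub_distrib]
    have hc : ∑ i, ((f (i + 1) - (i + 1)).val : ℤ) = ∑ i, ((f i - i).val : ℤ) :=
      Equiv.sum_comp (Equiv.addRight (1 : ZMod n)) (fun i => ((f i - i).val : ℤ))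
    rw [hc]
    ring
  have a0 : 0 ≤ ∑ i, s i := Finset.sum_nonneg (fun i _ => h0 i)
  have a2 : ∑ i, s i ≤ 2 * n := by
    have := Finset.sum_le_card_nsmul Finset.univ s 2 (fun i _ => h2 i)
    rw [Finset.card_univ, ZMod.card] at this
    simpa [mul_comm] using this
  have : (0 : ℤ) < n := by omega
  constructor <;> nlinarith

open Classical in
/-- summand -/
noncomputable def termT {X : Type*} [DecidableEq X]
    (κ : X → X → Prop) (f : X → X) (S : Finset X) : ℤ :=
  if h : IsClique κ S ∧ S.image f = S then
      (-1 : ℤ) ^ (S.card - 1) * ((Equiv.Perm.sign (fixedSetPerm f S h.2) : ℤˣ) : ℤ)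
    else 0

theorem term_single {X : Type*} [DecidableEq X] (κ : X → X → Prop) (f : X → X) (i : X) :
    termT κ f {i} = if f i = i then 1 else 0 := by
  unfold termT
  by_cases h : f i = i
  · have hc : IsClique κ {i} ∧ ({i} : Finset X).image f = {i} := by
      refine ⟨⟨by simp, ?_⟩, by simp [h]⟩
      intro x hx y hy hxy
      simp at hx hy
      exact absurd (hx.trans hy.symm) hxy
    rw [dif_pos hc, if_pos h]
    have : fixedSetPerm f {i} hc.2 = 1 := Subsingleton.elim _ _
    rw [this]; simp
  · rw [dif_neg, if_neg h]
    rintro ⟨_, h2⟩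
    simp at h2
    exact h h2

theorem term_pair {X : Type*} [DecidableEq X] (κ : X → X → Prop) (f : X → X) (i j : X)
    (hij : i ≠ j) (h1 : κ i j) (h2 : κ j i) :
    termT κ f {i, j} = (if f i = j ∧ f j = i then 1 else 0)
      - (if f i = i ∧ f j = j then 1 else 0) := by
  have hcl : IsClique κ {i, j} := by
    refine ⟨by simp, ?_⟩
    intro x hx y hy hxy
    simp at hx hy
    rcases hx with rfl | rfl <;> rcases hy with rfl | rfl <;> first | assumption | exact absurd rfl hxy
  unfold termT
  by_cases hs : f i = j ∧ f j = i
  · have him : ({i, j} : Finset X).image f = {i, j} := by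
      rw [Finset.image_insert, Finset.image_singleton, hs.1, hs.2, Finset.pair_comm]
    rw [dif_pos ⟨hcl, him⟩, if_pos hs, if_neg (fun h => hij (h.1.symm.trans hs.1))]
    have : fixedSetPerm f {i, j} him
        = Equiv.swap (⟨i, by simp⟩ : {x // x ∈ ({i, j} : Finset X)}) ⟨j, by simp⟩ := by
      ext ⟨x, hx⟩
      simp at hx
      rcases hx with rfl | rfl
      · simp [fixedSetPerm, hs.1]
      · simp [fixedSetPerm, hs.2]
    rw [this, Equiv.Perm.sign_swap (by simpa using hij), Finset.card_pair hij]
    simp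
  · rw [if_neg hs]
    by_cases hf : f i = i ∧ f j = j
    · have him : ({i, j} : Finset X).image f = {i, j} := by
        rw [Finset.image_insert, Finset.image_singleton, hf.1, hf.2]
      rw [dif_pos ⟨hcl, him⟩, if_pos hf]
      have : fixedSetPerm f {i, j} him = 1 := by
        ext ⟨x, hx⟩
        simp at hx
        rcases hx with rfl | rfl
        · simp [fixedSetPerm, hf.1]
        · simp [fixedSetPerm, hf.2]
      rw [this, Finset.card_pair hij]
      simp
    · rw [if_neg hf, dif_neg]
      · simp
      rintro ⟨_, h⟩
      rw [Finset.image_insert, Finset.image_singleton] at h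
      have m1 : f i ∈ ({i, j} : Finset X) := h ▸ (by simp)
      have m2 : f j ∈ ({i, j} : Finset X) := h ▸ (by simp)
      have m3 : i ∈ ({f i, f j} : Finset X) := h ▸ (by simp)
      have m4 : j ∈ ({f i, f j} : Finset X) := h ▸ (by simp)
      simp at m1 m2 m3 m4
      grind

theorem aux_pair_inj {n : ℕ} (hn : 3 ≤ n) [NeZero n] :
    Function.Injective (fun i : ZMod n => ({i, i + 1} : Finset (ZMod n))) := by
  intro i j h
  simp only at h
  have m1 : i ∈ ({j, j + 1} : Finset (ZMod n)) := h ▸ (by simp)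
  have m2 : i + 1 ∈ ({j, j + 1} : Finset (ZMod n)) := h ▸ (by simp)
  simp only [Finset.mem_insert, Finset.mem_singleton] at m1 m2
  rcases m1 with m1 | m1
  · exact m1
  · rcases m2 with m2 | m2
    · exact absurd (by linear_combination m2 - m1) (aux_two hn)
    · exact add_right_cancel m2

theorem aux_pair_card {n : ℕ} (hn : 3 ≤ n) [NeZero n] (i : ZMod n) :
    ({i, i + 1} : Finset (ZMod n)).card = 2 :=
  Finset.card_pair (by simpa using aux_one hn)

theorem aux_main {n : ℕ} (hn : 3 ≤ n) [NeZero n] (f : ZMod n → ZMod n) :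
    simpLef (cycleAdj n) f = ∑ i, locA f i +
      (if n = 3 then termT (cycleAdj n) f Finset.univ else 0) := by
  have e : simpLef (cycleAdj n) f = ∑ S : Finset (ZMod n), termT (cycleAdj n) f S := rfl
  rw [e]
  let A : Finset (Finset (ZMod n)) := Finset.univ.image (fun i => {i})
  let B : Finset (Finset (ZMod n)) := Finset.univ.image (fun i => {i, i + 1})
  let C : Finset (Finset (ZMod n)) := if n = 3 then {Finset.univ} else ∅
  have cA : ∀ S ∈ A, S.card = 1 := by
    intro S hS
    obtain ⟨i, -, rfl⟩ := Finset.mem_image.mp hS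
    simp
  have cB : ∀ S ∈ B, S.card = 2 := by
    intro S hS
    obtain ⟨i, -, rfl⟩ := Finset.mem_image.mp hS
    exact aux_pair_card hn i
  have cC : ∀ S ∈ C, S.card = 3 := by
    intro S hS
    by_cases h3 : n = 3
    · simp only [C, if_pos h3, Finset.mem_singleton] at hS
      rw [hS, Finset.card_univ, ZMod.card, h3]
    · simp [C, if_neg h3] at hS
  have dAB : Disjoint A B := Finset.disjoint_left.mpr (fun S h1 h2 => by
    have := cA S h1; have := cB S h2; omega)
  have dABC : Disjoint (A ∪ B) C := Finset.disjoint_left.mpr (fun S h1 h2 => by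
    have := cC S h2
    rcases Finset.mem_union.mp h1 with h | h
    · have := cA S h; omega
    · have := cB S h; omega)
  rw [← Finset.sum_subset (Finset.subset_univ ((A ∪ B) ∪ C)), Finset.sum_union dABC,
    Finset.sum_union dAB]
  · congr 1
    · rw [Finset.sum_image (fun a _ b _ h => Finset.singleton_injective h),
        Finset.sum_image (fun a _ b _ h => aux_pair_inj hn h), ← Finset.sum_add_distrib]
      refine Finset.sum_congr rfl (fun i _ => ?_)
      rw [term_single, term_pair (cycleAdj n) f i (i + 1) (by simpa using aux_one hn)
        (Or.inr (by ring)) (Or.inl (by ring))]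
      rfl
    · by_cases h3 : n = 3
      · simp only [C, if_pos h3, Finset.sum_singleton]
      · simp only [C, if_neg h3, Finset.sum_empty]
  · intro S _ hS
    unfold termT
    rw [dif_neg]
    rintro ⟨hc, -⟩
    apply hS
    rcases aux_clique hn S hc with ⟨i, rfl⟩ | ⟨i, rfl⟩ | ⟨h3, rfl⟩
    · simp [A]
    · simp [B]
    · simp [C, h3]

theorem aux_perm3 : ∀ σ : Equiv.Perm (ZMod 3),
    ∑ i, locA σ i + ((Equiv.Perm.sign σ : ℤˣ) : ℤ) = 1 := by
  unfold locA
  change ∀ σ : Equiv.Perm (Fin 3), _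
  decide

theorem aux_tri (f : ZMod 3 → ZMod 3) (hf : DigCont (cycleAdj 3) (cycleAdj 3) f) :
    0 ≤ ∑ i, locA f i + termT (cycleAdj 3) f Finset.univ ∧
    ∑ i, locA f i + termT (cycleAdj 3) f Finset.univ ≤ 2 := by
  by_cases h : IsClique (cycleAdj 3) Finset.univ ∧ Finset.univ.image f = Finset.univ
  · have hb : Function.Bijective f := by
      apply Finite.surjective_iff_bijective.mp
      intro y
      have hy : y ∈ Finset.univ.image f := by rw [h.2]; exact Finset.mem_univ y
      obtain ⟨x, -, hx⟩ := Finset.mem_image.mp hy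
      exact ⟨x, hx⟩
    have := aux_perm3 (Equiv.ofBijective f hb)
    have hs : Equiv.Perm.sign (fixedSetPerm f Finset.univ h.2)
        = Equiv.Perm.sign (Equiv.ofBijective f hb) := by
      apply Equiv.Perm.sign_eq_sign_of_equiv _ _ (Equiv.subtypeUnivEquiv (by simp))
      intro x
      rfl
    unfold termT
    rw [dif_pos h, hs, Finset.card_univ, ZMod.card]
    have e : ∑ i, locA (Equiv.ofBijective f hb) i = ∑ i, locA f i := rfl
    rw [e] at this
    norm_num
    omega
  · have := aux_sum (le_refl 3) f hf
    unfold termT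
    rw [dif_neg h, add_zero]
    exact this

/-- Let `n ≥ 3` and let `C_n` be the digital cycle on `n` points. Then for every
continuous self-map `f : C_n → C_n`, the simplicial Lefschetz number satisfies
`L(f) ∈ {0, 1, 2}`. -/
theorem simpLef_cycle_mem {n : ℕ} [NeZero n] (hn : 3 ≤ n)
    (f : ZMod n → ZMod n) (hf : DigCont (cycleAdj n) (cycleAdj n) f) :
    simpLef (cycleAdj n) f ∈ ({0, 1, 2} : Set ℤ) := by
  have key : 0 ≤ simpLef (cycleAdj n) f ∧ simpLef (cycleAdj n) f ≤ 2 := by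
    rw [aux_main hn f]
    by_cases h3 : n = 3
    · subst h3
      rw [if_pos rfl]
      exact aux_tri f hf
    · rw [if_neg h3, add_zero]
      exact aux_sum hn f hf
  simp only [Set.mem_insert_iff, Set.mem_singleton_iff]
  omega
end

section
/- Let X = {0,1}² ⊆ ℤ² with c1-adjacency (a digital cycle of 4 points). Then every c1-continuous self-map f : X → X has cubical Lefschetz number L̄(f) = 1. -/
theorem cubeSign_eq_aux {n : ℕ} (f : (Fin n → ℤ) → (Fin n → ℤ))
    (a : Fin n → ℤ) (D : Finset (Fin n))
    (p : Equiv.Perm {i // i ∈ D} × ({i // i ∈ D} → ℤ))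
    (hp1 : ∀ i, p.2 i = 1 ∨ p.2 i = -1)
    (hp2 : ∀ x ∈ eCube a D, ∀ i : {i // i ∈ D},
        f x (i : Fin n) = f a (i : Fin n) + p.2 i * (x ((p.1 i : Fin n)) - a ((p.1 i : Fin n)))) :
    cubeSign f a D = ((Equiv.Perm.sign p.1 : ℤˣ) : ℤ) * ∏ i, p.2 i := by
  have h : ∃ p : Equiv.Perm {i // i ∈ D} × ({i // i ∈ D} → ℤ),
      (∀ i, p.2 i = 1 ∨ p.2 i = -1) ∧
      ∀ x ∈ eCube a D, ∀ i : {i // i ∈ D},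
        f x (i : Fin n) = f a (i : Fin n) + p.2 i * (x ((p.1 i : Fin n)) - a ((p.1 i : Fin n))) :=
    ⟨p, hp1, hp2⟩
  unfold cubeSign
  rw [dif_pos h]
  have key : h.choose = p := by
    obtain ⟨h1, h2⟩ := h.choose_spec
    generalize h.choose = q at *
    have main : ∀ i : {i // i ∈ D}, q.1 i = p.1 i ∧ q.2 i = p.2 i := by
      intro i
      have hx : (fun j => a j + if j ∈ ({(p.1 i : Fin n)} : Finset (Fin n)) then (1 : ℤ) else 0)
          ∈ eCube a D := by
        unfold eCube
        refine Finset.mem_image.2 ⟨{(p.1 i : Fin n)}, ?_, rfl⟩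
        rw [Finset.mem_powerset, Finset.singleton_subset_iff]
        exact (p.1 i).2
      have e1 := h2 _ hx i
      have e2 := hp2 _ hx i
      rw [e2] at e1
      simp only [Finset.mem_singleton] at e1
      by_cases hq : (q.1 i : Fin n) = (p.1 i : Fin n)
      · refine ⟨Subtype.ext hq, ?_⟩
        simp [hq] at e1
        exact e1.symm
      · simp [hq] at e1
        rcases hp1 i with h | h <;> simp [h] at e1
    refine Prod.ext (Equiv.ext fun i => (main i).1) (funext fun i => (main i).2)
  rw [key]

theorem sign_empty_aux {n : ℕ} (f : (Fin n → ℤ) → (Fin n → ℤ)) (a : Fin n → ℤ) :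
    cubeSign f a ∅ = 1 := by
  rw [cubeSign_eq_aux f a ∅ (1, fun _ => 1) (fun i => Or.inl rfl)
    (fun x _ i => absurd i.2 (Finset.notMem_empty _))]
  simp

theorem eCube_single_aux {n : ℕ} (a : Fin n → ℤ) (i : Fin n) :
    eCube a {i} = {a, fun j => a j + if j = i then 1 else 0} := by
  ext x
  simp [eCube, Finset.mem_image, Finset.subset_singleton_iff, eq_comm]

theorem sign_single_aux {n : ℕ} (f : (Fin n → ℤ) → (Fin n → ℤ)) (a b : Fin n → ℤ) (i : Fin n)
    (hb : b = fun j => a j + if j = i then 1 else 0)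
    (h : f b i - f a i = 1 ∨ f b i - f a i = -1) :
    cubeSign f a {i} = f b i - f a i := by
  rw [cubeSign_eq_aux f a {i} (1, fun _ => f b i - f a i) (fun _ => h)]
  · simp
  · intro x hx j
    obtain ⟨j, hj⟩ := j
    rw [Finset.mem_singleton] at hj
    subst hj
    rw [eCube_single_aux, ← hb] at hx
    rcases Finset.mem_insert.1 hx with rfl | hx
    · simp
    · rw [Finset.mem_singleton] at hx
      subst hx
      have : x j = a j + 1 := by rw [hb]; simp
      simp [this]

theorem edge_aux {n : ℕ} (f : (Fin n → ℤ) → (Fin n → ℤ)) (a b : Fin n → ℤ) (i : Fin n)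
    (hb : b = fun j => a j + if j = i then 1 else 0) :
    (if ({f a, f b} : Finset (Fin n → ℤ)) = {a, b} then - cubeSign f a {i} else 0) =
      (if f a = a ∧ f b = b then -1 else if f a = b ∧ f b = a then 1 else (0 : ℤ)) := by
  have hbi : b i = a i + 1 := by rw [hb]; simp
  have hab : a ≠ b := fun h => by have := congrFun h i; omega
  by_cases h1 : f a = a ∧ f b = b
  · rw [if_pos h1, h1.1, h1.2, if_pos rfl, sign_single_aux f a b i hb] <;>
      rw [h1.1, h1.2, hbi] <;> simp
  · rw [if_neg h1]
    by_cases h2 : f a = b ∧ f b = a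
    · rw [if_pos h2, h2.1, h2.2, if_pos (Finset.pair_comm _ _), sign_single_aux f a b i hb] <;>
        rw [h2.1, h2.2, hbi] <;> simp
    · rw [if_neg h2, if_neg]
      intro h
      have m1 : f a ∈ ({a, b} : Finset (Fin n → ℤ)) := h ▸ by simp
      have m2 : f b ∈ ({a, b} : Finset (Fin n → ℤ)) := h ▸ by simp
      have m3 : a ∈ ({f a, f b} : Finset (Fin n → ℤ)) := h ▸ by simp
      have m4 : b ∈ ({f a, f b} : Finset (Fin n → ℤ)) := h ▸ by simp
      simp only [Finset.mem_insert, Finset.mem_singleton] at m1 m2 m3 m4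
      grind

theorem sq_aux : eCube (fun _ => (0 : ℤ)) (Finset.univ : Finset (Fin 2)) =
    {![0,0], ![1,0], ![0,1], ![1,1]} := by decide

theorem sign_sq1_aux (f : (Fin 2 → ℤ) → (Fin 2 → ℤ)) (s t : ℤ)
    (hs : s = 1 ∨ s = -1) (ht : t = 1 ∨ t = -1)
    (h1 : f ![1,0] = ![f ![0,0] 0 + s, f ![0,0] 1])
    (h2 : f ![0,1] = ![f ![0,0] 0, f ![0,0] 1 + t])
    (h3 : f ![1,1] = ![f ![0,0] 0 + s, f ![0,0] 1 + t]) :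
    cubeSign f ![0,0] Finset.univ = s * t := by
  rw [cubeSign_eq_aux f ![0,0] Finset.univ (1, fun i => ![s,t] i)]
  · have : ∏ i : {i : Fin 2 // i ∈ Finset.univ}, ![s,t] (i : Fin 2) = ∏ i : Fin 2, ![s,t] i :=
      Finset.prod_coe_sort Finset.univ (fun i : Fin 2 => ![s,t] i)
    simp only [this]
    simp
  · rintro ⟨i, _⟩
    fin_cases i <;> simpa
  · intro x hx
    have e : eCube ![0,0] (Finset.univ : Finset (Fin 2)) =
      {![0,0], ![1,0], ![0,1], ![1,1]} := by decide
    rw [e] at hx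
    simp only [Finset.mem_insert, Finset.mem_singleton] at hx
    rintro ⟨i, _⟩
    rcases hx with rfl | rfl | rfl | rfl <;> fin_cases i <;> simp [h1, h2, h3]

theorem sign_sq2_aux (f : (Fin 2 → ℤ) → (Fin 2 → ℤ)) (s t : ℤ)
    (hs : s = 1 ∨ s = -1) (ht : t = 1 ∨ t = -1)
    (h1 : f ![1,0] = ![f ![0,0] 0, f ![0,0] 1 + t])
    (h2 : f ![0,1] = ![f ![0,0] 0 + s, f ![0,0] 1])
    (h3 : f ![1,1] = ![f ![0,0] 0 + s, f ![0,0] 1 + t]) :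
    cubeSign f ![0,0] Finset.univ = - (s * t) := by
  rw [cubeSign_eq_aux f ![0,0] Finset.univ
    (Equiv.swap ⟨0, Finset.mem_univ _⟩ ⟨1, Finset.mem_univ _⟩, fun i => ![s,t] i)]
  · have : ∏ i : {i : Fin 2 // i ∈ Finset.univ}, ![s,t] (i : Fin 2) = ∏ i : Fin 2, ![s,t] i :=
      Finset.prod_coe_sort Finset.univ (fun i : Fin 2 => ![s,t] i)
    simp only [this]
    rw [Equiv.Perm.sign_swap (by simp)]
    simp
  · rintro ⟨i, _⟩
    fin_cases i <;> simpa
  · intro x hx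
    have e : eCube ![0,0] (Finset.univ : Finset (Fin 2)) =
      {![0,0], ![1,0], ![0,1], ![1,1]} := by decide
    rw [e] at hx
    simp only [Finset.mem_insert, Finset.mem_singleton] at hx
    rintro ⟨i, _⟩
    rcases hx with rfl | rfl | rfl | rfl <;> fin_cases i <;>
      simp [h1, h2, h3]

theorem cubLef_form_aux (f : (Fin 2 → ℤ) → (Fin 2 → ℤ)) :
    cubLef (eCube (fun _ => (0 : ℤ)) (Finset.univ : Finset (Fin 2))) f =
    (if f ![0,0] = ![0,0] then 1 else 0) + (if f ![1,0] = ![1,0] then 1 else 0) +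
    (if f ![0,1] = ![0,1] then 1 else 0) + (if f ![1,1] = ![1,1] then 1 else 0) +
    (if f ![0,0] = ![0,0] ∧ f ![1,0] = ![1,0] then -1 else
      if f ![0,0] = ![1,0] ∧ f ![1,0] = ![0,0] then 1 else 0) +
    (if f ![0,0] = ![0,0] ∧ f ![0,1] = ![0,1] then -1 else
      if f ![0,0] = ![0,1] ∧ f ![0,1] = ![0,0] then 1 else 0) +
    (if f ![1,0] = ![1,0] ∧ f ![1,1] = ![1,1] then -1 else
      if f ![1,0] = ![1,1] ∧ f ![1,1] = ![1,0] then 1 else 0) +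
    (if f ![0,1] = ![0,1] ∧ f ![1,1] = ![1,1] then -1 else
      if f ![0,1] = ![1,1] ∧ f ![1,1] = ![0,1] then 1 else 0) +
    (if ({f ![0,0], f ![1,0], f ![0,1], f ![1,1]} : Finset (Fin 2 → ℤ)) =
       {![0,0], ![1,0], ![0,1], ![1,1]} then cubeSign f ![0,0] Finset.univ else 0) := by
  have U : (Finset.univ : Finset (Finset (Fin 2))) = {∅, {0}, {1}, Finset.univ} := by decide
  have E : ∀ a : Fin 2 → ℤ, eCube a ∅ = {a} := by intro a; simp [eCube]
  have Q : eCube ![0,0] (Finset.univ : Finset (Fin 2)) =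
      {![0,0], ![1,0], ![0,1], ![1,1]} := by decide
  have A1 : eCube (![0,0] : Fin 2 → ℤ) {0} = {![0,0], ![1,0]} := by decide
  have A2 : eCube (![0,0] : Fin 2 → ℤ) {1} = {![0,0], ![0,1]} := by decide
  have A3 : eCube (![1,0] : Fin 2 → ℤ) {1} = {![1,0], ![1,1]} := by decide
  have A4 : eCube (![0,1] : Fin 2 → ℤ) {0} = {![0,1], ![1,1]} := by decide
  rw [← edge_aux f ![0,0] ![1,0] 0 (by decide), ← edge_aux f ![0,0] ![0,1] 1 (by decide),
    ← edge_aux f ![1,0] ![1,1] 1 (by decide), ← edge_aux f ![0,1] ![1,1] 0 (by decide)]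
  rw [sq_aux]
  have N1 : ¬ eCube (![1,0] : Fin 2 → ℤ) {0} ⊆ {![0,0], ![1,0], ![0,1], ![1,1]} := by decide
  have N2 : ¬ eCube (![0,1] : Fin 2 → ℤ) {1} ⊆ {![0,0], ![1,0], ![0,1], ![1,1]} := by decide
  have N3 : ¬ eCube (![1,1] : Fin 2 → ℤ) {0} ⊆ {![0,0], ![1,0], ![0,1], ![1,1]} := by decide
  have N4 : ¬ eCube (![1,1] : Fin 2 → ℤ) {1} ⊆ {![0,0], ![1,0], ![0,1], ![1,1]} := by decide
  have N5 : ¬ eCube (![1,0] : Fin 2 → ℤ) Finset.univ ⊆ {![0,0], ![1,0], ![0,1], ![1,1]} := by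
    decide
  have N6 : ¬ eCube (![0,1] : Fin 2 → ℤ) Finset.univ ⊆ {![0,0], ![1,0], ![0,1], ![1,1]} := by
    decide
  have N7 : ¬ eCube (![1,1] : Fin 2 → ℤ) Finset.univ ⊆ {![0,0], ![1,0], ![0,1], ![1,1]} := by
    decide
  have Y1 : ({![0,0], ![1,0]} : Finset (Fin 2 → ℤ)) ⊆ {![0,0], ![1,0], ![0,1], ![1,1]} := by decide
  have Y2 : ({![0,0], ![0,1]} : Finset (Fin 2 → ℤ)) ⊆ {![0,0], ![1,0], ![0,1], ![1,1]} := by decide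
  have Y3 : ({![1,0], ![1,1]} : Finset (Fin 2 → ℤ)) ⊆ {![0,0], ![1,0], ![0,1], ![1,1]} := by decide
  have Y4 : ({![0,1], ![1,1]} : Finset (Fin 2 → ℤ)) ⊆ {![0,0], ![1,0], ![0,1], ![1,1]} := by decide
  have Z1 : ({![0,0]} : Finset (Fin 2 → ℤ)) ⊆ {![0,0], ![1,0], ![0,1], ![1,1]} := by decide
  have Z2 : ({![1,0]} : Finset (Fin 2 → ℤ)) ⊆ {![0,0], ![1,0], ![0,1], ![1,1]} := by decide
  have Z3 : ({![0,1]} : Finset (Fin 2 → ℤ)) ⊆ {![0,0], ![1,0], ![0,1], ![1,1]} := by decide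
  have Z4 : ({![1,1]} : Finset (Fin 2 → ℤ)) ⊆ {![0,0], ![1,0], ![0,1], ![1,1]} := by decide
  have S : ∀ g : (Fin 2 → ℤ) → ℤ, ∑ a ∈ ({![0,0], ![1,0], ![0,1], ![1,1]} : Finset (Fin 2 → ℤ)),
      g a = g ![0,0] + (g ![1,0] + (g ![0,1] + g ![1,1])) := by
    intro g
    rw [Finset.sum_insert (by decide), Finset.sum_insert (by decide),
      Finset.sum_insert (by decide), Finset.sum_singleton]
  have T : ∀ g : Finset (Fin 2) → ℤ, ∑ a : Finset (Fin 2),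
      g a = g ∅ + (g {0} + (g {1} + g Finset.univ)) := by
    intro g
    rw [U, Finset.sum_insert (by decide), Finset.sum_insert (by decide),
      Finset.sum_insert (by decide), Finset.sum_singleton]
  unfold cubLef
  simp only [S, T, N1, N2, N3, N4, N5, N6, N7, false_and, if_false]
  simp only [E, Q, A1, A2, A3, A4, Y1, Y2, Y3, Y4, Z1, Z2, Z3, Z4, Finset.Subset.refl, true_and,
    Finset.image_insert, Finset.image_singleton, Finset.singleton_inj, sign_empty_aux,
    Finset.card_empty, Finset.card_singleton, Finset.card_univ, Fintype.card_fin]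
  norm_num
  ring

theorem cubLef_square_eq_one
    (f : (Fin 2 → ℤ) → (Fin 2 → ℤ))
    (hfX : MapsInto (eCube (fun _ => (0 : ℤ)) (Finset.univ : Finset (Fin 2)))
      (eCube (fun _ => (0 : ℤ)) Finset.univ) f)
    (hf : c1Cont (eCube (fun _ => (0 : ℤ)) (Finset.univ : Finset (Fin 2))) f) :
    cubLef (eCube (fun _ => (0 : ℤ)) (Finset.univ : Finset (Fin 2))) f = 1 := by
  rw [cubLef_form_aux]
  rw [sq_aux] at hfX hf
  have c1 := hf ![0,0] (by decide) ![1,0] (by decide) (by unfold c1Adj; decide)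
  have c2 := hf ![0,0] (by decide) ![0,1] (by decide) (by unfold c1Adj; decide)
  have c3 := hf ![1,0] (by decide) ![1,1] (by decide) (by unfold c1Adj; decide)
  have c4 := hf ![0,1] (by decide) ![1,1] (by decide) (by unfold c1Adj; decide)
  have m1 := hfX ![0,0] (by decide)
  have m2 := hfX ![1,0] (by decide)
  have m3 := hfX ![0,1] (by decide)
  have m4 := hfX ![1,1] (by decide)
  have s1 := sign_sq1_aux f
  have s2 := sign_sq2_aux f
  clear hf hfX
  generalize cubeSign f ![0,0] Finset.univ = C at *
  generalize f ![0,0] = p at *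
  generalize f ![1,0] = q at *
  generalize f ![0,1] = r at *
  generalize f ![1,1] = u at *
  generalize hT : (if ({p, q, r, u} : Finset (Fin 2 → ℤ)) =
    {![0,0], ![1,0], ![0,1], ![1,1]} then C else 0) = T
  have s11 := s1 1 1
  have s12 := s1 1 (-1)
  have s13 := s1 (-1) 1
  have s14 := s1 (-1) (-1)
  have s21 := s2 1 1
  have s22 := s2 1 (-1)
  have s23 := s2 (-1) 1
  have s24 := s2 (-1) (-1)
  clear s1 s2
  unfold c1Adj at c1 c2 c3 c4
  simp only [Finset.mem_insert, Finset.mem_singleton] at m1 m2 m3 m4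
  rcases m1 with rfl | rfl | rfl | rfl <;> rcases m2 with rfl | rfl | rfl | rfl <;>
    first
    | (exfalso; revert c1; decide)
    | (rcases m3 with rfl | rfl | rfl | rfl <;>
        first
        | (exfalso; revert c2; decide)
        | (rcases m4 with rfl | rfl | rfl | rfl <;>
            first
            | (exfalso; revert c3; decide)
            | (exfalso; revert c4; decide)
            | (clear c1 c2 c3 c4 s11 s12 s13 s14 s21 s22 s23 s24
               rw [if_neg (by decide)] at hT
               subst hT
               decide)
            | (rw [if_pos (by decide)] at hT
               subst hT
               first
               | (rw [s11 (by decide) (by decide) (by decide) (by decide) (by decide)]; decide)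
               | (rw [s12 (by decide) (by decide) (by decide) (by decide) (by decide)]; decide)
               | (rw [s13 (by decide) (by decide) (by decide) (by decide) (by decide)]; decide)
               | (rw [s14 (by decide) (by decide) (by decide) (by decide) (by decide)]; decide)
               | (rw [s21 (by decide) (by decide) (by decide) (by decide) (by decide)]; decide)
               | (rw [s22 (by decide) (by decide) (by decide) (by decide) (by decide)]; decide)
               | (rw [s23 (by decide) (by decide) (by decide) (by decide) (by decide)]; decide)
               | (rw [s24 (by decide) (by decide) (by decide) (by decide) (by decide)]; decide))))
end

section
/- Let X ⊆ ℤ^n and Y ⊆ ℤ^m be finite digital images with c1-adjacency, where n, m ≤ 4, and let f : X → Y and g : Y → X be c1-continuous maps. Then L̄(f ∘ g) = L̄(g ∘ f), where f ∘ g : Y → Y and g ∘ f : X → X. -/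
theorem aux_mem_eCube {n : ℕ} (a : Fin n → ℤ) (D : Finset (Fin n)) (x : Fin n → ℤ) :
    x ∈ eCube a D ↔ ∀ i, (i ∈ D → x i = a i ∨ x i = a i + 1) ∧ (i ∉ D → x i = a i) := by
  unfold eCube
  simp only [Finset.mem_image, Finset.mem_powerset]
  constructor
  · rintro ⟨s, hs, rfl⟩ i
    refine ⟨fun _ => ?_, fun hi => ?_⟩
    · by_cases h : i ∈ s <;> simp [h]
    · have : i ∉ s := fun h => hi (hs h)
      simp [this]
  · intro h
    refine ⟨D.filter (fun i => x i = a i + 1), Finset.filter_subset _ _, ?_⟩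
    funext i
    have h1 := (h i).1
    have h2 := (h i).2
    by_cases hi : i ∈ D
    · rcases h1 hi with h3 | h3 <;> simp [hi, h3]
    · simp [hi, h2 hi]

theorem aux_self_mem {n : ℕ} (a : Fin n → ℤ) (D : Finset (Fin n)) : a ∈ eCube a D := by
  rw [aux_mem_eCube]; intro i; simp

theorem aux_eCube_inj {n : ℕ} {a b : Fin n → ℤ} {D E : Finset (Fin n)}
    (h : eCube a D = eCube b E) : a = b ∧ D = E := by
  have h1 : a ∈ eCube b E := h ▸ aux_self_mem a D
  have h2 : b ∈ eCube a D := h ▸ aux_self_mem b E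
  have hab : a = b := by
    funext i
    have h3 := (aux_mem_eCube _ _ _).1 h1 i
    have h4 := (aux_mem_eCube _ _ _).1 h2 i
    by_cases hD : i ∈ D <;> by_cases hE : i ∈ E <;> simp [hD, hE] at h3 h4 <;> omega
  refine ⟨hab, ?_⟩
  subst hab
  have key : ∀ (D E : Finset (Fin n)), eCube a D = eCube a E → D ⊆ E := by
    intro D E h i hi
    have h5 : (fun k => if k = i then a k + 1 else a k) ∈ eCube a D := by
      rw [aux_mem_eCube]
      intro k
      by_cases hk : k = i
      · subst hk; simp [hi]
      · simp [hk]
    rw [h, aux_mem_eCube] at h5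
    by_contra hE
    have := (h5 i).2 hE
    simp at this
  exact Finset.Subset.antisymm (key _ _ h) (key _ _ h.symm)

theorem aux_card_eCube {n : ℕ} (a : Fin n → ℤ) (D : Finset (Fin n)) :
    (eCube a D).card = 2 ^ D.card := by
  unfold eCube
  rw [Finset.card_image_of_injective, Finset.card_powerset]
  intro s t h
  ext i
  have := congrFun h i
  by_cases h1 : i ∈ s <;> by_cases h2 : i ∈ t <;> simp [h1, h2] at this ⊢

theorem aux_adj {n : ℕ} {x y : Fin n → ℤ} (h : c1Adj x y) :
    ∃ i, ∃ s : ℤ, (s = 1 ∨ s = -1) ∧ y = x + Pi.single i s := by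
  unfold c1Adj at h
  have : ∃ i, x i ≠ y i := by
    by_contra! hh
    simp [hh] at h
  obtain ⟨i, hi⟩ := this
  have hsum := Finset.add_sum_erase Finset.univ (fun i => |x i - y i|) (Finset.mem_univ i)
  rw [h] at hsum
  have hpos : 0 < |x i - y i| := abs_pos.2 (sub_ne_zero.2 hi)
  have hnn : 0 ≤ ∑ k ∈ Finset.univ.erase i, |x k - y k| := Finset.sum_nonneg (fun _ _ => abs_nonneg _)
  have hz : ∑ k ∈ Finset.univ.erase i, |x k - y k| = 0 := by omega
  have h1 : |x i - y i| = 1 := by omega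
  rw [Finset.sum_eq_zero_iff_of_nonneg (fun _ _ => abs_nonneg _)] at hz
  refine ⟨i, y i - x i, ?_, ?_⟩
  · rcases (abs_eq (by norm_num)).1 h1 with h2 | h2
    · right; omega
    · left; omega
  · funext k
    by_cases hk : k = i
    · subst hk; simp
    · have := hz k (by simp [hk])
      rw [abs_eq_zero] at this
      simp [hk]; omega

theorem aux_adj_single {n : ℕ} (x : Fin n → ℤ) (i : Fin n) :
    c1Adj x (x + Pi.single i 1) := by
  unfold c1Adj
  have : ∀ k, |x k - (x + Pi.single i 1 : Fin n → ℤ) k| = if k = i then 1 else 0 := by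
    intro k
    by_cases hk : k = i
    · subst hk; simp
    · simp [hk]
  simp only [this]
  simp

theorem aux_unit {n : ℕ} {i j k l : Fin n} {s t r w : ℤ}
    (hs : s = 1 ∨ s = -1) (ht : t = 1 ∨ t = -1) (hr : r = 1 ∨ r = -1) (hw : w = 1 ∨ w = -1)
    (h : (Pi.single i s + Pi.single j t : Fin n → ℤ) = Pi.single k r + Pi.single l w)
    (hne : (Pi.single i s : Fin n → ℤ) ≠ Pi.single k r)
    (h0 : (Pi.single i s + Pi.single j t : Fin n → ℤ) ≠ 0) :
    (Pi.single j t : Fin n → ℤ) = Pi.single k r := by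
  have hi := congrFun h i
  have hj := congrFun h j
  have hk := congrFun h k
  have hl := congrFun h l
  simp only [Pi.add_apply, Pi.single_apply] at hi hj hk hl
  have h0' : i = j → s + t ≠ 0 := by
    rintro rfl e; apply h0; rw [← Pi.single_add, e, Pi.single_zero]
  have hne' : i = k → s ≠ r := by rintro rfl rfl; exact hne rfl
  have : j = k ∧ t = r := by grind
  rw [this.1, this.2]

theorem aux_key {n m : ℕ} (X : Finset (Fin n → ℤ)) (f : (Fin n → ℤ) → (Fin m → ℤ))
    (hf : c1Cont X f) (a : Fin n → ℤ) (D : Finset (Fin n)) (hX : eCube a D ⊆ X)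
    (hinj : Set.InjOn f (eCube a D)) :
    ∃ (b : Fin m → ℤ) (E : Finset (Fin m)) (e : {j // j ∈ E} ≃ {i // i ∈ D})
      (s : {j // j ∈ E} → ℤ), (∀ j, s j = 1 ∨ s j = -1) ∧
      (eCube a D).image f = eCube b E ∧
      ∀ x ∈ eCube a D, ∀ x' ∈ eCube a D, ∀ j : {j // j ∈ E}, f x j.1 - f x' j.1 = s j * (x (e j) - x' (e j)) := by
  classical
  -- vertices
  let v : Finset (Fin n) → (Fin n → ℤ) := fun T k => a k + if k ∈ T then 1 else 0
  have hv : ∀ T ⊆ D, v T ∈ eCube a D := fun T hT =>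
    Finset.mem_image.2 ⟨T, Finset.mem_powerset.2 hT, rfl⟩
  have hvinj : ∀ T T', v T = v T' → T = T' := by
    intro T T' h
    ext i
    have := congrFun h i
    by_cases h1 : i ∈ T <;> by_cases h2 : i ∈ T' <;> simp [v, h1, h2] at this ⊢
  have hfv : ∀ T ⊆ D, ∀ T' ⊆ D, f (v T) = f (v T') → T = T' := fun T hT T' hT' h =>
    hvinj _ _ (hinj (hv T hT) (hv T' hT') h)
  have hstep : ∀ T ⊆ D, ∀ k ∈ D, k ∉ T → ∃ i, ∃ s : ℤ, (s = 1 ∨ s = -1) ∧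
      f (v (insert k T)) = f (v T) + Pi.single i s := by
    intro T hT k hk hkT
    have hI : insert k T ⊆ D := Finset.insert_subset hk hT
    have hadj : c1Adj (v T) (v (insert k T)) := by
      have : v (insert k T) = v T + Pi.single k 1 := by
        funext l
        by_cases hl : l = k
        · subst hl; simp [v, hkT]
        · simp [v, hl]
      rw [this]; exact aux_adj_single _ _
    rcases hf _ (hX (hv T hT)) _ (hX (hv _ hI)) hadj with h | h
    · have := hfv _ hT _ hI h
      exact absurd (this ▸ Finset.mem_insert_self k T) hkT
    · exact aux_adj h
  have hbase : ∀ k : {i // i ∈ D}, ∃ i, ∃ s : ℤ, (s = 1 ∨ s = -1) ∧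
      f (v {k.1}) = f (v ∅) + Pi.single i s := by
    intro k
    have := hstep ∅ (Finset.empty_subset _) k.1 k.2 (by simp)
    simpa using this
  choose j s hs hjs using hbase
  -- squares
  have hsq : ∀ T ⊆ D, ∀ p q : {i // i ∈ D}, p.1 ∉ T → q.1 ∉ T → p ≠ q →
      f (v (insert p.1 T)) = f (v T) + Pi.single (j p) (s p) →
      f (v (insert q.1 T)) = f (v T) + Pi.single (j q) (s q) →
      f (v (insert q.1 (insert p.1 T))) = f (v (insert p.1 T)) + Pi.single (j q) (s q) := by
    intro T hT p q hp hq hpq h1 h2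
    have hpq' : p.1 ≠ q.1 := fun h => hpq (Subtype.ext h)
    have hpT : insert p.1 T ⊆ D := Finset.insert_subset p.2 hT
    have hqT : insert q.1 T ⊆ D := Finset.insert_subset q.2 hT
    obtain ⟨i1, t1, ht1, e1⟩ := hstep _ hpT q.1 q.2 (by simp [hq, hpq'.symm])
    obtain ⟨i2, t2, ht2, e2⟩ := hstep _ hqT p.1 p.2 (by simp [hp, hpq'])
    rw [Finset.insert_comm] at e2
    have e3 : (Pi.single (j p) (s p) + Pi.single i1 t1 : Fin m → ℤ)
        = Pi.single (j q) (s q) + Pi.single i2 t2 := by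
      have := e1.symm.trans e2
      rw [h1, h2, add_assoc, add_assoc] at this
      exact add_left_cancel this
    have := aux_unit (hs p) ht1 (hs q) ht2 e3 (by
      intro h
      rw [← h, ← h1] at h2
      have := hfv _ hqT _ hpT h2
      have h3 : q.1 ∈ insert p.1 T := this ▸ Finset.mem_insert_self q.1 T
      simp [hq, hpq'.symm] at h3) (by
      intro h
      rw [h1, add_assoc, h, add_zero] at e1
      have := hfv _ (Finset.insert_subset q.2 hpT) _ hT e1
      exact hq (this ▸ Finset.mem_insert_self q.1 _))
    rw [e1, this]
  have hgen : ∀ N : ℕ, ∀ T ⊆ D, T.card = N → ∀ q : {i // i ∈ D}, q.1 ∉ T →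
      f (v (insert q.1 T)) = f (v T) + Pi.single (j q) (s q) := by
    intro N
    induction N with
    | zero =>
      intro T hT hc q hq
      rw [Finset.card_eq_zero] at hc
      subst hc
      simpa using hjs q
    | succ N ih =>
      intro T hT hc q hq
      obtain ⟨p, T', hp, rfl, hc'⟩ := Finset.card_eq_succ.1 hc
      have hT' : T' ⊆ D := (Finset.subset_insert _ _).trans hT
      have hpD : p ∈ D := hT (Finset.mem_insert_self _ _)
      have hq' : q.1 ∉ T' := fun h => hq (Finset.mem_insert_of_mem h)
      have hne : (⟨p, hpD⟩ : {i // i ∈ D}) ≠ q := by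
        rintro rfl; exact hq (Finset.mem_insert_self _ _)
      exact hsq T' hT' ⟨p, hpD⟩ q hp hq' hne (ih T' hT' hc' ⟨p, hpD⟩ hp) (ih T' hT' hc' q hq')
  have hjinj : Function.Injective j := by
    intro p q hj
    by_contra hpq
    have hpq' : p.1 ≠ q.1 := fun h => hpq (Subtype.ext h)
    have h1 := hjs p
    have h2 := hjs q
    have h3 := hgen _ {p.1} (by simpa using p.2) rfl q (by simpa using hpq'.symm)
    rw [h1, hj, add_assoc, ← Pi.single_add] at h3
    by_cases hss : s p = s q
    · rw [hj, hss, ← h2] at h1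
      have := hfv _ (by simpa using p.2) _ (by simpa using q.2) h1
      exact hpq' (Finset.singleton_injective this)
    · have hz : s p + s q = 0 := by
        rcases hs p with h | h <;> rcases hs q with h' | h' <;> simp [h, h'] at hss ⊢
      rw [hz, Pi.single_zero, add_zero] at h3
      have := hfv _ (by
        intro x hx
        simp at hx
        rcases hx with rfl | rfl
        · exact q.2
        · exact p.2) _ (Finset.empty_subset _) h3
      simp at this
  have hval : ∀ T ⊆ D, f (v T) = f (v ∅) + ∑ k : {i // i ∈ D},
      if k.1 ∈ T then Pi.single (j k) (s k) else 0 := by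
    intro T
    induction T using Finset.induction_on with
    | empty => intro _; simp
    | insert p T hp ih =>
      intro hT
      have hT' : T ⊆ D := (Finset.subset_insert _ _).trans hT
      have hpD : p ∈ D := hT (Finset.mem_insert_self _ _)
      rw [hgen _ T hT' rfl ⟨p, hpD⟩ hp, ih hT', add_assoc]
      congr 1
      have : (Pi.single (j ⟨p, hpD⟩) (s ⟨p, hpD⟩) : Fin m → ℤ) =
        ∑ k : {i // i ∈ D}, if k = ⟨p, hpD⟩ then Pi.single (j k) (s k) else 0 := by
        rw [Finset.sum_ite_eq']; simp
      rw [this, ← Finset.sum_add_distrib]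
      refine Finset.sum_congr rfl fun k _ => ?_
      by_cases hk : k = ⟨p, hpD⟩
      · subst hk; simp [hp]
      · have : k.1 ≠ p := fun h => hk (Subtype.ext h)
        simp [hk, this]
  have hvset : ∀ x ∈ eCube a D, ∃ T ⊆ D, x = v T := by
    intro x hx
    obtain ⟨T, hT, rfl⟩ := Finset.mem_image.1 hx
    exact ⟨T, Finset.mem_powerset.1 hT, rfl⟩
  have hv0 : v ∅ = a := by funext i; simp [v]
  have hin : ∀ x ∈ eCube a D, ∀ k : {i // i ∈ D},
      f x (j k) = f a (j k) + s k * (x k.1 - a k.1) := by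
    intro x hx k
    obtain ⟨T, hT, rfl⟩ := hvset x hx
    rw [hval T hT, hv0, Pi.add_apply, Finset.sum_apply, Finset.sum_eq_single k]
    · by_cases h : k.1 ∈ T <;> simp [v, h]
    · intro l _ hl
      by_cases h : l.1 ∈ T
      · have hne : j k ≠ j l := fun h => hl (hjinj h).symm
        simp [h, hne]
      · simp [h]
    · simp
  have hout : ∀ x ∈ eCube a D, ∀ l, (∀ k, j k ≠ l) → f x l = f a l := by
    intro x hx l hl
    obtain ⟨T, hT, rfl⟩ := hvset x hx
    rw [hval T hT, hv0, Pi.add_apply, Finset.sum_apply, Finset.sum_eq_zero, add_zero]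
    intro k _
    by_cases h : k.1 ∈ T
    · simp [h, Pi.single_apply, (hl k).symm]
    · simp [h]
  let E : Finset (Fin m) := Finset.univ.image j
  have hE : ∀ k, j k ∈ E := fun k => Finset.mem_image_of_mem _ (Finset.mem_univ _)
  have hbij : Function.Bijective (fun k => (⟨j k, hE k⟩ : {l // l ∈ E})) := by
    constructor
    · intro p q h
      exact hjinj (congrArg Subtype.val h)
    · rintro ⟨l, hl⟩
      obtain ⟨k, _, rfl⟩ := Finset.mem_image.1 hl
      exact ⟨k, rfl⟩
  let e0 : {i // i ∈ D} ≃ {l // l ∈ E} := Equiv.ofBijective _ hbij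
  have he0 : ∀ k, e0 k = ⟨j k, hE k⟩ := fun k => rfl
  let b : Fin m → ℤ := fun l => f a l +
    if h : l ∈ E then (if s (e0.symm ⟨l, h⟩) = 1 then 0 else -1) else 0
  refine ⟨b, E, e0.symm, fun l => s (e0.symm l), fun l => hs _, ?_, ?_⟩
  · apply Finset.eq_of_subset_of_card_le
    · intro y hy
      obtain ⟨x, hx, rfl⟩ := Finset.mem_image.1 hy
      rw [aux_mem_eCube]
      intro l
      constructor
      · intro hl
        obtain ⟨k, _, rfl⟩ := Finset.mem_image.1 hl
        have h1 : e0.symm ⟨j k, hl⟩ = k := by rw [Equiv.symm_apply_eq, he0]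
        have h2 := hin x hx k
        have h3 := ((aux_mem_eCube _ _ _).1 hx k.1).1 k.2
        simp only [b, hl, dif_pos, h1]
        rcases hs k with h4 | h4 <;> rcases h3 with h3 | h3 <;> rw [h4, h3] at h2 <;>
          simp [h4] <;> omega
      · intro hl
        simp only [b, hl, dif_neg, not_false_eq_true, add_zero]
        exact hout x hx l (fun k hk => hl (hk ▸ hE k))
    · rw [aux_card_eCube, Finset.card_image_of_injOn hinj, aux_card_eCube]
      have : E.card = D.card := by
        rw [Finset.card_image_of_injective _ hjinj]; simp
      rw [this]
  · intro x hx x' hx' l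
    obtain ⟨k, rfl⟩ := e0.surjective l
    simp only [Equiv.symm_apply_apply]
    rw [he0, hin x hx k, hin x' hx' k]
    ring

theorem aux_cubeSign {n : ℕ} (f : (Fin n → ℤ) → (Fin n → ℤ)) (a : Fin n → ℤ)
    (D : Finset (Fin n)) (π : Equiv.Perm {i // i ∈ D}) (s : {i // i ∈ D} → ℤ)
    (hs : ∀ i, s i = 1 ∨ s i = -1)
    (h : ∀ x ∈ eCube a D, ∀ i : {i // i ∈ D},
        f x (i : Fin n) = f a (i : Fin n) + s i * (x ((π i : Fin n)) - a ((π i : Fin n)))) :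
    cubeSign f a D = ((Equiv.Perm.sign π : ℤˣ) : ℤ) * ∏ i, s i := by
  have hex : ∃ p : Equiv.Perm {i // i ∈ D} × ({i // i ∈ D} → ℤ),
      (∀ i, p.2 i = 1 ∨ p.2 i = -1) ∧
      ∀ x ∈ eCube a D, ∀ i : {i // i ∈ D},
        f x (i : Fin n) = f a (i : Fin n) + p.2 i * (x ((p.1 i : Fin n)) - a ((p.1 i : Fin n))) :=
    ⟨(π, s), hs, h⟩
  have hu : ∀ p : Equiv.Perm {i // i ∈ D} × ({i // i ∈ D} → ℤ),
      ((∀ i, p.2 i = 1 ∨ p.2 i = -1) ∧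
      ∀ x ∈ eCube a D, ∀ i : {i // i ∈ D},
        f x (i : Fin n) = f a (i : Fin n) + p.2 i * (x ((p.1 i : Fin n)) - a ((p.1 i : Fin n)))) →
      p = (π, s) := by
    rintro ⟨ρ, t⟩ ⟨ht, h'⟩
    have key : ∀ i, ρ i = π i ∧ t i = s i := by
      intro i
      have hx : (fun k => if k = (π i).1 then a k + 1 else a k) ∈ eCube a D := by
        rw [aux_mem_eCube]
        intro k
        by_cases hk : k = (π i).1
        · subst hk; simp
        · simp [hk]
      have h1 := h _ hx i
      have h2 := h' _ hx i
      rw [h1] at h2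
      have hsi := hs i
      have hti := ht i
      by_cases hk : ρ i = π i
      · simp [hk] at h2
        exact ⟨hk, h2.symm⟩
      · have : (ρ i).1 ≠ (π i).1 := fun h => hk (Subtype.ext h)
        simp [this] at h2
        omega
    exact Prod.ext (Equiv.ext fun i => (key i).1) (funext fun i => (key i).2)
  unfold cubeSign
  rw [dif_pos hex, hu _ hex.choose_spec]

theorem aux_injOn {n m : ℕ} {f : (Fin n → ℤ) → (Fin m → ℤ)} {g : (Fin m → ℤ) → (Fin n → ℤ)}
    {S : Finset (Fin n → ℤ)} (h : S.image (g ∘ f) = S) : Set.InjOn f S := by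
  have h1 : Set.InjOn (g ∘ f) S := by
    apply Finset.card_image_iff.1
    rw [h]
  intro x hx y hy hxy
  exact h1 hx hy (congrArg g hxy)

theorem aux_match {n m : ℕ}
    (X : Finset (Fin n → ℤ)) (Y : Finset (Fin m → ℤ))
    (f : (Fin n → ℤ) → (Fin m → ℤ)) (g : (Fin m → ℤ) → (Fin n → ℤ))
    (hfXY : MapsInto X Y f)
    (hf : c1Cont X f) (hg : c1Cont Y g) (a : Fin n → ℤ) (D : Finset (Fin n))
    (hX : eCube a D ⊆ X) (hfix : (eCube a D).image (g ∘ f) = eCube a D) :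
    ∃ (b : Fin m → ℤ) (E : Finset (Fin m)), eCube b E ⊆ Y ∧
      (eCube b E).image (f ∘ g) = eCube b E ∧
      eCube b E = (eCube a D).image f ∧
      (-1 : ℤ) ^ D.card * cubeSign (g ∘ f) a D = (-1 : ℤ) ^ E.card * cubeSign (f ∘ g) b E := by
  obtain ⟨b, E, e, s, hs, him, hlin⟩ := aux_key X f hf a D hX (aux_injOn hfix)
  have hY : eCube b E ⊆ Y := by
    rw [← him]
    intro y hy
    obtain ⟨x, hx, rfl⟩ := Finset.mem_image.1 hy
    exact hfXY _ (hX hx)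
  have hgim : (eCube b E).image g = eCube a D := by
    rw [← him, Finset.image_image, hfix]
  have hfix' : (eCube b E).image (f ∘ g) = eCube b E := by
    rw [← Finset.image_image, hgim, him]
  refine ⟨b, E, hY, hfix', him.symm, ?_⟩
  obtain ⟨a', D', e', t, ht, him', hlin'⟩ := aux_key Y g hg b E hY (aux_injOn hfix')
  obtain ⟨rfl, rfl⟩ := aux_eCube_inj (him'.symm.trans hgim)
  have hfm : ∀ x ∈ eCube a' D', f x ∈ eCube b E := fun x hx =>
    him ▸ Finset.mem_image_of_mem f hx
  have hgm : ∀ y ∈ eCube b E, g y ∈ eCube a' D' := fun y hy =>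
    him' ▸ Finset.mem_image_of_mem g hy
  have hcard : D'.card = E.card := by
    have := Fintype.card_congr e
    simpa using this.symm
  have hss : ∀ u w : ℤ, (u = 1 ∨ u = -1) → (w = 1 ∨ w = -1) → (u * w = 1 ∨ u * w = -1) := by
    rintro u w (rfl | rfl) (rfl | rfl) <;> simp
  rw [aux_cubeSign (g ∘ f) a' D' (e'.trans e) (fun i => t i * s (e' i))
      (fun i => hss _ _ (ht i) (hs _)) ?_,
    aux_cubeSign (f ∘ g) b E (e.trans e') (fun i => s i * t (e i))
      (fun i => hss _ _ (hs i) (ht _)) ?_, hcard]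
  · have h1 : Equiv.Perm.sign (e'.trans e) = Equiv.Perm.sign (e.trans e') := by
      have := Equiv.Perm.sign_symm_trans_trans (e'.trans e) e'
      rw [← this]
      congr 1
      ext x
      simp
    rw [h1, Finset.prod_mul_distrib, Finset.prod_mul_distrib, Equiv.prod_comp e' s,
      Equiv.prod_comp e t, mul_comm (∏ i, t i)]
  · intro y hy i
    have h1 := hlin (g y) (hgm y hy) (g b) (hgm _ (aux_self_mem b E)) i
    have h2 := hlin' y hy b (aux_self_mem b E) (e i)
    simp only [Function.comp_apply, Equiv.trans_apply]
    rw [h2] at h1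
    linear_combination h1
  · intro x hx i
    have h1 := hlin' (f x) (hfm x hx) (f a') (hfm _ (aux_self_mem a' D')) i
    have h2 := hlin x hx a' (aux_self_mem a' D') (e' i)
    simp only [Function.comp_apply, Equiv.trans_apply]
    rw [h2] at h1
    linear_combination h1

open Classical in
theorem aux_cubLef {n : ℕ} (X : Finset (Fin n → ℤ)) (F : (Fin n → ℤ) → (Fin n → ℤ)) :
    cubLef X F = ∑ p ∈ (X ×ˢ (Finset.univ : Finset (Finset (Fin n)))).filter
      (fun p => eCube p.1 p.2 ⊆ X ∧ (eCube p.1 p.2).image F = eCube p.1 p.2),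
      (-1 : ℤ) ^ p.2.card * cubeSign F p.1 p.2 := by
  unfold cubLef
  rw [Finset.sum_filter, Finset.sum_product]

/-- Let `X ⊆ ℤ^n` and `Y ⊆ ℤ^m` be finite digital images with `c1`-adjacency, `n, m ≤ 4`,
and let `f : X → Y` and `g : Y → X` be `c1`-continuous maps.
Then `L̄(f ∘ g) = L̄(g ∘ f)`. -/
theorem cubLef_comp_comm {n m : ℕ} (hn : n ≤ 4) (hm : m ≤ 4)
    (X : Finset (Fin n → ℤ)) (Y : Finset (Fin m → ℤ))
    (f : (Fin n → ℤ) → (Fin m → ℤ)) (g : (Fin m → ℤ) → (Fin n → ℤ))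
    (hfXY : MapsInto X Y f) (hgYX : MapsInto Y X g)
    (hf : c1Cont X f) (hg : c1Cont Y g) :
    cubLef Y (f ∘ g) = cubLef X (g ∘ f) := by
  classical
  rw [aux_cubLef, aux_cubLef]
  symm
  have H : ∀ p ∈ (X ×ˢ (Finset.univ : Finset (Finset (Fin n)))).filter
      (fun p => eCube p.1 p.2 ⊆ X ∧ (eCube p.1 p.2).image (g ∘ f) = eCube p.1 p.2),
      ∃ q : (Fin m → ℤ) × Finset (Fin m), eCube q.1 q.2 ⊆ Y ∧
      (eCube q.1 q.2).image (f ∘ g) = eCube q.1 q.2 ∧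
      eCube q.1 q.2 = (eCube p.1 p.2).image f ∧
      (-1 : ℤ) ^ p.2.card * cubeSign (g ∘ f) p.1 p.2
        = (-1 : ℤ) ^ q.2.card * cubeSign (f ∘ g) q.1 q.2 := by
    intro p hp
    obtain ⟨_, h1, h2⟩ := Finset.mem_filter.1 hp
    obtain ⟨b, E, h⟩ := aux_match X Y f g hfXY hf hg p.1 p.2 h1 h2
    exact ⟨(b, E), h⟩
  choose! φ h1 h2 h3 h4 using H
  refine Finset.sum_bij (fun p _ => φ p) ?_ ?_ ?_ ?_
  · intro p hp
    simp only [Finset.mem_filter, Finset.mem_product, Finset.mem_univ, and_true]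
    exact ⟨h1 p hp (aux_self_mem _ _), h1 p hp, h2 p hp⟩
  · intro p hp q hq hpq
    have e1 := (Finset.mem_filter.1 hp).2.2
    have e2 := (Finset.mem_filter.1 hq).2.2
    rw [← Finset.image_image, ← h3 p hp] at e1
    rw [← Finset.image_image, ← h3 q hq, ← hpq] at e2
    obtain ⟨r1, r2⟩ := aux_eCube_inj (e1.symm.trans e2)
    exact Prod.ext r1 r2
  · intro q hq
    obtain ⟨_, k1, k2⟩ := Finset.mem_filter.1 hq
    obtain ⟨a, D, l1, l2, l3, _⟩ := aux_match Y X g f hgYX hg hf q.1 q.2 k1 k2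
    have hp : (a, D) ∈ (X ×ˢ (Finset.univ : Finset (Finset (Fin n)))).filter
      (fun p => eCube p.1 p.2 ⊆ X ∧ (eCube p.1 p.2).image (g ∘ f) = eCube p.1 p.2) := by
      simp only [Finset.mem_filter, Finset.mem_product, Finset.mem_univ, and_true]
      exact ⟨l1 (aux_self_mem _ _), l1, l2⟩
    refine ⟨(a, D), hp, ?_⟩
    have := h3 _ hp
    simp only at this
    rw [l3, Finset.image_image, k2] at this
    obtain ⟨r1, r2⟩ := aux_eCube_inj this
    exact Prod.ext r1 r2
  · intro p hp
    exact h4 p hp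
end

section
/- Let (X,κ) and (Y,λ) be finite digital images and let f : X → Y and g : Y → X be continuous maps. Then L(f ∘ g) = L(g ∘ f), where f ∘ g : Y → Y and g ∘ f : X → X. -/
theorem aux_clique_s17 {X Y : Type*} [DecidableEq Y] {κ : X → X → Prop} {lam : Y → Y → Prop}
    {f : X → Y} (hf : DigCont κ lam f) {S : Finset X} (hS : IsClique κ S) :
    IsClique lam (S.image f) := by
  refine ⟨hS.1.image f, ?_⟩
  intro a ha b hb hab
  obtain ⟨x, hx, rfl⟩ := Finset.mem_image.mp ha
  obtain ⟨y, hy, rfl⟩ := Finset.mem_image.mp hb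
  have hxy : x ≠ y := fun h => hab (by rw [h])
  exact (hf x y (hS.2 x hx y hy hxy)).resolve_left hab

theorem aux_image {X Y : Type*} [DecidableEq X] [DecidableEq Y]
    {f : X → Y} {g : Y → X} {S : Finset X} (h : S.image (g ∘ f) = S) :
    (S.image f).image (f ∘ g) = S.image f := by
  rw [Finset.image_image, Function.comp_assoc, ← Finset.image_image, h]

theorem aux_inj {X Y : Type*} [DecidableEq X]
    {f : X → Y} {g : Y → X} {S : Finset X} (h : S.image (g ∘ f) = S) :
    Set.InjOn f S := by
  have h1 : Set.InjOn (g ∘ f) S := by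
    apply Finset.injOn_of_card_image_eq
    rw [h]
  intro x hx y hy hxy
  exact h1 hx hy (congrArg g hxy)

theorem aux_sign {X Y : Type*} [DecidableEq X] [DecidableEq Y]
    {f : X → Y} {g : Y → X} {S : Finset X} (h : S.image (g ∘ f) = S)
    (h' : (S.image f).image (f ∘ g) = S.image f) :
    Equiv.Perm.sign (fixedSetPerm (g ∘ f) S h) =
      Equiv.Perm.sign (fixedSetPerm (f ∘ g) (S.image f) h') := by
  let φ : {x // x ∈ S} → {y // y ∈ S.image f} := fun x => ⟨f x.1, Finset.mem_image_of_mem f x.2⟩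
  have hφ : Function.Bijective φ := by
    constructor
    · intro x y hxy
      exact Subtype.ext (aux_inj h x.2 y.2 (congrArg Subtype.val hxy))
    · rintro ⟨y, hy⟩
      obtain ⟨x, hx, rfl⟩ := Finset.mem_image.mp hy
      exact ⟨⟨x, hx⟩, rfl⟩
  exact Equiv.Perm.sign_eq_sign_of_equiv _ _ (Equiv.ofBijective φ hφ) (fun x => rfl)

/-- Let `(X,κ)` and `(Y,λ)` be finite digital images and `f : X → Y`, `g : Y → X`
continuous maps. Then `L(f ∘ g) = L(g ∘ f)`. -/
theorem simpLef_comp_comm {X Y : Type*} [Fintype X] [DecidableEq X]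
    [Fintype Y] [DecidableEq Y]
    (κ : X → X → Prop) (hκsym : Symmetric κ) (hκirr : Irreflexive κ)
    (lam : Y → Y → Prop) (hlamsym : Symmetric lam) (hlamirr : Irreflexive lam)
    (f : X → Y) (g : Y → X) (hf : DigCont κ lam f) (hg : DigCont lam κ g) :
    simpLef lam (f ∘ g) = simpLef κ (g ∘ f) := by
  classical
  symm
  unfold simpLef
  refine Finset.sum_bij_ne_zero (fun S _ _ => S.image f) (fun _ _ _ => Finset.mem_univ _) ?_ ?_ ?_
  · intro S _ hS T _ hT hST
    have h1 : IsClique κ S ∧ S.image (g ∘ f) = S := by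
      by_contra hc
      exact hS (dif_neg hc)
    have h2 : IsClique κ T ∧ T.image (g ∘ f) = T := by
      by_contra hc
      exact hT (dif_neg hc)
    rw [← h1.2, ← h2.2, ← Finset.image_image, ← Finset.image_image]
    exact congrArg _ hST
  · intro T _ hT
    have h : IsClique lam T ∧ T.image (f ∘ g) = T := by
      by_contra hc
      exact hT (dif_neg hc)
    refine ⟨T.image g, Finset.mem_univ _, ?_, ?_⟩
    · rw [dif_pos ⟨aux_clique_s17 hg h.1, aux_image h.2⟩]
      exact mul_ne_zero (pow_ne_zero _ (by norm_num)) (Units.ne_zero _)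
    · rw [Finset.image_image, h.2]
  · intro S _ hS
    have h : IsClique κ S ∧ S.image (g ∘ f) = S := by
      by_contra hc
      exact hS (dif_neg hc)
    rw [dif_pos h, dif_pos ⟨aux_clique_s17 hf h.1, aux_image h.2⟩,
      aux_sign h.2 (aux_image h.2), Finset.card_image_of_injOn (aux_inj h.2)]
end
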